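/- Let q be the braiding matrix of type g(2,3) with Dynkin diagram the chain on vertices 1,2,3 with all three vertices labeled −1 and both edges labeled ξ, where ξ ∈ G_3'. Set x_u = [[x_{12}, x_{123}]_c, x_2]_c and x_v = [[x_{123}, x_{23}]_c, x_2]_c. Then in every pre-Nichols algebra B of q with finite GKdim one has [x_1, x_u]_c = [x_v, x_3]_c = [x_u, x_3]_c = [x_1, x_v]_c = 0. -/

import Mathlib

/-
Common framework for formalizing statements from
"Finite GK-dimensional pre-Nichols algebras of (super)modular and unidentified type"
(Angiono, Campagnolo, Sanmarco).

We work over `ℂ` (an algebraically closed field of characteristic zero).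
A braiding matrix is `q : Fin θ → Fin θ → ℂˣ`.  The tensor algebra `T(V)` of the
associated braided vector space of diagonal type is realized as the free algebra
on `Fin θ`.  The braided bialgebra structure on `T(V)` (the braided coproduct,
uniquely determined by the braiding matrix) is packaged in the structure
`BraidedStr`: its fields characterize it uniquely, so quantifying over
`S : BraidedStr θ q` is equivalent to using "the" braided coproduct.

A pre-Nichols algebra of `q` is the quotient `T(V)/I` by an ℕ₀-homogeneous
(two-sided) braided bi-ideal `I` generated in degrees ≥ 2 (`IsPreNicholsIdeal`);
such an ideal is automatically contained in the defining ideal `Jq` of the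
Nichols algebra, which is the largest such ideal.  A statement
"`x = 0` holds in the pre-Nichols algebra `T(V)/I`" is formalized as `x ∈ I`.
-/

open scoped TensorProduct

noncomputable section

namespace PreNicholsPaper

/-- The tensor algebra `T(V)` of the braided vector space of diagonal type of rank `θ`. -/
abbrev TV (θ : ℕ) := FreeAlgebra ℂ (Fin θ)

/-- The generator `x_i` of `T(V)`. -/
def gen (θ : ℕ) (i : Fin θ) : TV θ := FreeAlgebra.ι ℂ i

/-- The monomial `x_{i_1} ⋯ x_{i_n}` associated to a word. -/
def wordElem (θ : ℕ) (w : List (Fin θ)) : TV θ := (w.map (gen θ)).prod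

/-- The multidegree in `ℕ₀^θ` of a word. -/
def degW (θ : ℕ) (w : List (Fin θ)) : Fin θ → ℕ := fun i => w.count i

/-- `α_i`, the `i`-th canonical basis vector of `ℕ₀^θ`. -/
def δ (θ : ℕ) (i : Fin θ) : Fin θ → ℕ := fun k => if k = i then 1 else 0

/-- The bilinear form `ℕ₀^θ × ℕ₀^θ → ℂˣ` attached to the braiding matrix,
`q(α_i, α_j) = q_{ij}`, evaluated in `ℂ`. -/
def qf {θ : ℕ} (q : Fin θ → Fin θ → ℂˣ) (a b : Fin θ → ℕ) : ℂ :=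
  ∏ i : Fin θ, ∏ j : Fin θ, (q i j : ℂ) ^ (a i * b j)

/-- `q̃_{ij} = q_{ij} q_{ji}`. -/
def qtil {θ : ℕ} (q : Fin θ → Fin θ → ℂˣ) (i j : Fin θ) : ℂ := (q i j : ℂ) * (q j i : ℂ)

/-- The braided commutator `[u,v]_c = uv - q(a,b) vu` of elements `u, v`
which are homogeneous of multidegrees `a`, `b` respectively. -/
def brk {θ : ℕ} (q : Fin θ → Fin θ → ℂˣ) (a b : Fin θ → ℕ) (u v : TV θ) : TV θ :=
  u * v - qf q a b • (v * u)

/-- `(ad_c x_i) y = x_i y - q(α_i, b) y x_i` for `y` homogeneous of multidegree `b`. -/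
def ad1 {θ : ℕ} (q : Fin θ → Fin θ → ℂˣ) (i : Fin θ) (b : Fin θ → ℕ) (y : TV θ) : TV θ :=
  brk q (δ θ i) b (gen θ i) y

/-- The iterated braided adjoint `x_{i_1 i_2 ⋯ i_k} = (ad_c x_{i_1}) x_{i_2 ⋯ i_k}`. -/
def xw {θ : ℕ} (q : Fin θ → Fin θ → ℂˣ) : List (Fin θ) → TV θ
  | [] => 1
  | [i] => gen θ i
  | i :: w => ad1 q i (degW θ w) (xw q w)

/-- `(ad_c x_i)^m x_j`. -/
def adpow {θ : ℕ} (q : Fin θ → Fin θ → ℂˣ) (i j : Fin θ) : ℕ → TV θ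
  | 0 => gen θ j
  | m + 1 => ad1 q i (fun k => m * δ θ i k + δ θ j k) (adpow q i j m)

/-- The homogeneous component of total degree `n` of `T(V)`. -/
def homogTot (θ : ℕ) (n : ℕ) : Submodule ℂ (TV θ) :=
  Submodule.span ℂ {x | ∃ w : List (Fin θ), w.length = n ∧ x = wordElem θ w}

/-- The homogeneous component of multidegree `d ∈ ℕ₀^θ` of `T(V)`. -/
def homogD (θ : ℕ) (d : Fin θ → ℕ) : Submodule ℂ (TV θ) :=
  Submodule.span ℂ {x | ∃ w : List (Fin θ), degW θ w = d ∧ x = wordElem θ w}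

/-- The braided bialgebra structure on `T(V)` determined by the braiding matrix `q`:
the braided coproduct `Δ` together with the multiplication `mulB` of the braided
tensor product `T(V) ⊗ T(V)`.  These axioms determine `Δ` and `mulB` uniquely. -/
structure BraidedStr (θ : ℕ) (q : Fin θ → Fin θ → ℂˣ) where
  Δ : TV θ →ₗ[ℂ] TensorProduct ℂ (TV θ) (TV θ)
  mulB : TensorProduct ℂ (TV θ) (TV θ) →ₗ[ℂ]
    TensorProduct ℂ (TV θ) (TV θ) →ₗ[ℂ] TensorProduct ℂ (TV θ) (TV θ)
  mulB_spec : ∀ (a d : TV θ) (wb wc : List (Fin θ)),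
    mulB (a ⊗ₜ[ℂ] wordElem θ wb) (wordElem θ wc ⊗ₜ[ℂ] d)
      = qf q (degW θ wb) (degW θ wc) • ((a * wordElem θ wc) ⊗ₜ[ℂ] (wordElem θ wb * d))
  Δ_one : Δ 1 = 1 ⊗ₜ[ℂ] 1
  Δ_gen : ∀ i, Δ (gen θ i) = gen θ i ⊗ₜ[ℂ] 1 + 1 ⊗ₜ[ℂ] gen θ i
  Δ_mul : ∀ u v : TV θ, Δ (u * v) = mulB (Δ u) (Δ v)

variable {θ : ℕ} {q : Fin θ → Fin θ → ℂˣ}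

/-- `x` is a primitive element. -/
def IsPrimitiveIn (S : BraidedStr θ q) (x : TV θ) : Prop :=
  S.Δ x = x ⊗ₜ[ℂ] (1 : TV θ) + (1 : TV θ) ⊗ₜ[ℂ] x

/-- The submodule `I ⊗ T(V) + T(V) ⊗ J` of `T(V) ⊗ T(V)`. -/
def mixedPair (I J : Submodule ℂ (TV θ)) : Submodule ℂ (TensorProduct ℂ (TV θ) (TV θ)) :=
  Submodule.span ℂ
    ({x | ∃ a b : TV θ, a ∈ I ∧ x = a ⊗ₜ[ℂ] b} ∪ {x | ∃ a b : TV θ, b ∈ J ∧ x = a ⊗ₜ[ℂ] b})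

/-- The submodule `I ⊗ T(V) + T(V) ⊗ I` of `T(V) ⊗ T(V)`. -/
def mixedSub (I : Submodule ℂ (TV θ)) : Submodule ℂ (TensorProduct ℂ (TV θ) (TV θ)) :=
  mixedPair I I

/-- `I` is the defining ideal of a pre-Nichols algebra of `q`：an ℕ₀-homogeneous
two-sided (bi-)ideal of `T(V)` generated in degrees `≥ 2` which is also a coideal.
Such an ideal is automatically contained in the defining ideal `Jq` of the Nichols
algebra, and the pre-Nichols algebra is the quotient `T(V)/I`. -/
structure IsPreNicholsIdeal (S : BraidedStr θ q) (I : Submodule ℂ (TV θ)) : Prop where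
  mul_left : ∀ a x : TV θ, x ∈ I → a * x ∈ I
  mul_right : ∀ a x : TV θ, x ∈ I → x * a ∈ I
  homog_ge2 : I = Submodule.span ℂ {x | x ∈ I ∧ ∃ n, 2 ≤ n ∧ x ∈ homogTot θ n}
  coideal : ∀ x ∈ I, S.Δ x ∈ mixedSub I

/-- The defining ideal `J_q` of the Nichols algebra `B_q = T(V)/J_q`:
the maximal homogeneous braided Hopf ideal generated in degrees `≥ 2`. -/
def Jq (S : BraidedStr θ q) : Submodule ℂ (TV θ) := sSup {I | IsPreNicholsIdeal S I}

/-- The standard filtration of `T(V)`: span of words of length `≤ n`. -/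
def Wfil (θ : ℕ) (n : ℕ) : Submodule ℂ (TV θ) :=
  Submodule.span ℂ {x | ∃ w : List (Fin θ), w.length ≤ n ∧ x = wordElem θ w}

/-- The quotient algebra `T(V)/I` has finite Gelfand–Kirillov dimension, i.e.
the standard filtration of the (finitely generated) quotient has polynomial growth. -/
def FinGK (I : Submodule ℂ (TV θ)) : Prop :=
  ∃ C d : ℕ, ∀ n : ℕ, Module.finrank ℂ ((Wfil θ n).map I.mkQ) ≤ C * (n + 1) ^ d

/-- The Gelfand–Kirillov dimension of the quotient algebra `T(V)/I`. -/
def GKdim (I : Submodule ℂ (TV θ)) : ℝ :=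
  Filter.limsup
    (fun n : ℕ => Real.log (Module.finrank ℂ ((Wfil θ n).map I.mkQ)) / Real.log n)
    Filter.atTop

/-- `I` defines an eminent pre-Nichols algebra: it is a finite-GKdim pre-Nichols
algebra, and every finite-GKdim pre-Nichols algebra of `q` is a quotient of it. -/
def IsEminent (S : BraidedStr θ q) (I : Submodule ℂ (TV θ)) : Prop :=
  IsPreNicholsIdeal S I ∧ FinGK I ∧
    ∀ I' : Submodule ℂ (TV θ), IsPreNicholsIdeal S I' → FinGK I' → I ≤ I'

/-- The Dynkin diagram of the braiding matrix `q`: vertices `Fin θ`, an edge between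
`i ≠ j` iff `q̃_{ij} ≠ 1`. -/
def dynkin {θ : ℕ} (q : Fin θ → Fin θ → ℂˣ) : SimpleGraph (Fin θ) :=
  SimpleGraph.fromRel (fun i j => qtil q i j ≠ 1)

/-- The quantum number `(m)_t = 1 + t + ⋯ + t^{m-1}`. -/
def qnum (t : ℂ) (m : ℕ) : ℂ := ∑ k ∈ Finset.range m, t ^ k

/-- The set of `n ∈ ℕ₀` such that `(n+1)_{q_{ii}} (1 - q_{ii}^n q̃_{ij}) = 0`,
i.e. such that `(ad_c x_i)^{n+1} x_j = 0` in the Nichols algebra.  The entry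
`c_{ij}` of the generalized Cartan matrix is `-(min of this set)`. -/
def cSet {θ : ℕ} (q : Fin θ → Fin θ → ℂˣ) (i j : Fin θ) : Set ℕ :=
  {n | qnum (q i i : ℂ) (n + 1) * (1 - (q i i : ℂ) ^ n * qtil q i j) = 0}

/-- The generalized Cartan matrix of `q`. -/
def cij {θ : ℕ} (q : Fin θ → Fin θ → ℂˣ) (i j : Fin θ) : ℤ :=
  if i = j then 2 else -(Int.ofNat (sInf (cSet q i j)))

/-- All entries `c_{ij}` are defined at the vertex `i`. -/
def reflectable {θ : ℕ} (q : Fin θ → Fin θ → ℂˣ) (i : Fin θ) : Prop :=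
  ∀ j, j ≠ i → (cSet q i j).Nonempty

/-- The `i`-th reflection of the braiding matrix:
`(r_i q)_{jk} = q(s_i α_j, s_i α_k)` where `s_i α_j = α_j - c_{ij} α_i`. -/
def reflectMat {θ : ℕ} (q : Fin θ → Fin θ → ℂˣ) (i : Fin θ) : Fin θ → Fin θ → ℂˣ :=
  fun j k =>
    q j k * q j i ^ (-(cij q i k)) * q i k ^ (-(cij q i j)) * q i i ^ (cij q i j * cij q i k)

/-- The reflection `s_i` acting on `ℤ^θ`. -/
def sRefl {θ : ℕ} (q : Fin θ → Fin θ → ℂˣ) (i : Fin θ) (β : Fin θ → ℤ) : Fin θ → ℤ :=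
  fun k => β k - (if k = i then ∑ j, cij q i j * β j else 0)

/-- The (real) roots of `q`, together with the base points of the Weyl groupoid at
which they live: pairs `(q', β)` obtained from a simple root of `q` by iterated
reflections. -/
inductive ReachRoot {θ : ℕ} (q₀ : Fin θ → Fin θ → ℂˣ) :
    (Fin θ → Fin θ → ℂˣ) → (Fin θ → ℤ) → Prop
  | simple (j : Fin θ) : ReachRoot q₀ q₀ (fun k => if k = j then 1 else 0)
  | reflect {q' : Fin θ → Fin θ → ℂˣ} {β : Fin θ → ℤ} (i : Fin θ) :
      ReachRoot q₀ q' β → ReachRoot q₀ (reflectMat q' i) (sRefl q' i β)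

/-- `q` has a finite (generalized) root system: all reflections are defined at every
point of the Weyl groupoid, and the set of roots so obtained is finite. -/
def FiniteRootSystem {θ : ℕ} (q : Fin θ → Fin θ → ℂˣ) : Prop :=
  (∀ q' i, (∃ β, ReachRoot q q' β) → reflectable q' i) ∧
    Set.Finite {β : Fin θ → ℤ | ∃ q', ReachRoot q q' β}

/-- Conjecture (Andruskiewitsch–Angiono–Heckenberger): the root system of a Nichols
algebra of diagonal type with finite Gelfand–Kirillov dimension is finite. -/
def AAH : Prop :=
  ∀ (θ : ℕ) (q : Fin θ → Fin θ → ℂˣ) (S : BraidedStr θ q), FinGK (Jq S) → FiniteRootSystem q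

/-- The two-sided ideal of `T(V)` generated by a set. -/
def idealGen (θ : ℕ) (s : Set (TV θ)) : Submodule ℂ (TV θ) :=
  Submodule.span ℂ {x | ∃ g ∈ s, ∃ a b : TV θ, x = a * g * b}

end PreNicholsPaper

namespace PreNicholsPaper

/-- `x_u = [[x_{12}, x_{123}]_c, x_2]_c` (vertices `1,2,3` are `0,1,2 : Fin 3`). -/
def xu231 (q : Fin 3 → Fin 3 → ℂˣ) : TV 3 :=
  brk q ![2, 2, 1] ![0, 1, 0]
    (brk q ![1, 1, 0] ![1, 1, 1] (xw q [0, 1]) (xw q [0, 1, 2])) (gen 3 1)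

/-- `x_v = [[x_{123}, x_{23}]_c, x_2]_c`. -/
def xv132 (q : Fin 3 → Fin 3 → ℂˣ) : TV 3 :=
  brk q ![1, 2, 2] ![0, 1, 0]
    (brk q ![1, 1, 1] ![0, 1, 1] (xw q [0, 1, 2]) (xw q [1, 2])) (gen 3 1)

/-!
A nonzero primitive element `y` of degree `β`, `|β| ≥ 2`, of a pre-Nichols algebra `T(V)/I` of
finite GKdim extends `V` to a braided subspace `V ⊕ ky` of primitive elements. The Nichols algebra
of `V ⊕ ky` is a subquotient of `T(V)/I`, hence has finite GKdim, and by AAH the braiding matrix of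
`V ⊕ ky` has a finite root system. This is impossible if `q(β, β) = 1` and `β` is linked to some
vertex, which gives `x_i ^ 2 = 0` and `x_{13} = 0`. With these relations `x_u` and `x_v` are
primitive, and then so are the four brackets, because `q(a, b) q(b, a) = ξ ^ 3 = 1` for the degrees
`a`, `b` of their two entries. A bracket that does not vanish extends the diagram to a star with all
vertices `-1` and all edges `ξ`. Reflection at its centre turns the three leaves into a triangle
with vertices `ξ` and edges `ξ⁻¹`, of affine type `A₂⁽¹⁾`, which has infinitely many roots.
-/

section Slices

variable {R M M' N N' : Type*} [CommSemiring R] [AddCommMonoid M] [Module R M]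
  [AddCommMonoid M'] [Module R M'] [AddCommMonoid N] [Module R N] [AddCommMonoid N'] [Module R N']

/-- Contraction of the left tensor factor with a linear functional, `a ⊗ b ↦ f(a) b`. -/
def leftSlice (f : M →ₗ[R] R) : M ⊗[R] M' →ₗ[R] M' :=
  (TensorProduct.lid R M').toLinearMap ∘ₗ LinearMap.rTensor M' f

/-- Contraction of the right tensor factor with a linear functional, `a ⊗ b ↦ f(b) a`. -/
def rightSlice (f : M' →ₗ[R] R) : M ⊗[R] M' →ₗ[R] M :=
  (TensorProduct.rid R M).toLinearMap ∘ₗ LinearMap.lTensor M f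

@[simp] theorem leftSlice_tmul (f : M →ₗ[R] R) (a : M) (b : M') :
    leftSlice f (a ⊗ₜ[R] b) = f a • b := by
  simp [leftSlice]

@[simp] theorem rightSlice_tmul (f : M' →ₗ[R] R) (a : M) (b : M') :
    rightSlice f (a ⊗ₜ[R] b) = f b • a := by
  simp [rightSlice]

theorem leftSlice_smul (c : R) (f : M →ₗ[R] R) (t : M ⊗[R] M') :
    leftSlice (c • f) t = c • leftSlice f t := by
  simp [leftSlice, LinearMap.rTensor_smul]

theorem leftSlice_map (f : N →ₗ[R] R) (a : M →ₗ[R] N) (b : M' →ₗ[R] N') (t : M ⊗[R] M') :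
    leftSlice f (TensorProduct.map a b t) = b (leftSlice (f ∘ₗ a) t) := by
  suffices h : leftSlice f ∘ₗ TensorProduct.map a b = b ∘ₗ leftSlice (f ∘ₗ a) from
    DFunLike.congr_fun h t
  exact TensorProduct.ext' fun x y => by simp

theorem rightSlice_map (f : N' →ₗ[R] R) (a : M →ₗ[R] N) (b : M' →ₗ[R] N') (t : M ⊗[R] M') :
    rightSlice f (TensorProduct.map a b t) = a (rightSlice (f ∘ₗ b) t) := by
  suffices h : rightSlice f ∘ₗ TensorProduct.map a b = a ∘ₗ rightSlice (f ∘ₗ b) from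
    DFunLike.congr_fun h t
  exact TensorProduct.ext' fun x y => by simp

theorem apply_leftSlice_eq_apply_rightSlice (f : M →ₗ[R] R) (g : M' →ₗ[R] R) (t : M ⊗[R] M') :
    g (leftSlice f t) = f (rightSlice g t) := by
  suffices h : g ∘ₗ leftSlice f = f ∘ₗ rightSlice g from DFunLike.congr_fun h t
  exact TensorProduct.ext' fun x y => by simp [mul_comm]

end Slices

section SeparatingSlices

variable {K M M' ι ι' : Type*} [Field K] [AddCommGroup M] [Module K M] [AddCommGroup M']
  [Module K M']

theorem tensor_eq_zero_of_separating {f : ι → M →ₗ[K] K} {g : ι' → M' →ₗ[K] K}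
    (hf : ∀ x, (∀ a, f a x = 0) → x = 0) (hg : ∀ y, (∀ b, g b y = 0) → y = 0)
    {t : M ⊗[K] M'} (ht : ∀ a b, g b (leftSlice (f a) t) = 0) : t = 0 := by
  classical
  let 𝒞 := Module.Basis.ofVectorSpace K M'
  refine (TensorProduct.equivFinsuppOfBasisRight (M := M) 𝒞).injective ?_
  rw [map_zero]
  ext k
  rw [TensorProduct.equivFinsuppOfBasisRight_apply]
  refine hf _ fun a => ?_
  change f a (rightSlice (𝒞.coord k) t) = 0
  rw [← apply_leftSlice_eq_apply_rightSlice, hg _ (ht a), map_zero]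

end SeparatingSlices

section Words

variable {θ : ℕ}

theorem algHom_ext_gen {A : Type*} [Semiring A] [Algebra ℂ A] {f g : TV θ →ₐ[ℂ] A}
    (h : ∀ i, f (gen θ i) = g (gen θ i)) : f = g :=
  FreeAlgebra.hom_ext (funext h)

theorem gen_induction {P : TV θ → Prop} (one : P 1) (add : ∀ x y, P x → P y → P (x + y))
    (smul : ∀ (c : ℂ) x, P x → P (c • x)) (gen_mul : ∀ i x, P x → P (gen θ i * x))
    (x : TV θ) : P x := by
  suffices h : ∀ y, P y → P (x * y) by simpa using h 1 one
  induction x using FreeAlgebra.induction with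
  | grade0 r => intro y hy; rw [← Algebra.smul_def]; exact smul r y hy
  | grade1 i => exact gen_mul i
  | mul a b ha hb => intro y hy; rw [mul_assoc]; exact ha _ (hb _ hy)
  | add a b ha hb => intro y hy; rw [add_mul]; exact add _ _ (ha _ hy) (hb _ hy)

theorem linearMap_ext_gen {M : Type*} [AddCommMonoid M] [Module ℂ M] {f g : TV θ →ₗ[ℂ] M}
    (one : f 1 = g 1) (gen_mul : ∀ i x, f x = g x → f (gen θ i * x) = g (gen θ i * x)) :
    f = g := by
  ext x
  induction x using gen_induction with
  | one => exact one
  | add x y hx hy => rw [map_add, map_add, hx, hy]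
  | smul c x hx => rw [map_smul, map_smul, hx]
  | gen_mul i x hx => exact gen_mul i x hx

@[simp] theorem wordElem_nil : wordElem θ [] = 1 := rfl

theorem wordElem_cons (i : Fin θ) (w : List (Fin θ)) :
    wordElem θ (i :: w) = gen θ i * wordElem θ w := by
  simp [wordElem]

theorem wordElem_singleton (i : Fin θ) : wordElem θ [i] = gen θ i := by
  simp [wordElem]

theorem wordElem_append (v w : List (Fin θ)) :
    wordElem θ (v ++ w) = wordElem θ v * wordElem θ w := by
  simp [wordElem]

theorem degW_nil : degW θ [] = 0 := by
  ext; simp [degW]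

theorem degW_cons (i : Fin θ) (w : List (Fin θ)) : degW θ (i :: w) = δ θ i + degW θ w := by
  ext k
  rcases eq_or_ne k i with rfl | h
  · simp [degW, δ, add_comm]
  · simp [degW, δ, h, h.symm]

theorem degW_singleton (i : Fin θ) : degW θ [i] = δ θ i := by
  rw [degW_cons, degW_nil, add_zero]

theorem degW_append (v w : List (Fin θ)) : degW θ (v ++ w) = degW θ v + degW θ w := by
  ext k
  simp [degW]

theorem span_range_wordElem : Submodule.span ℂ (Set.range (wordElem θ)) = ⊤ := by
  refine Submodule.eq_top_iff'.2 fun x => ?_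
  induction x using gen_induction with
  | one => exact Submodule.subset_span ⟨[], rfl⟩
  | add x y hx hy => exact add_mem hx hy
  | smul c x hx => exact Submodule.smul_mem _ c hx
  | gen_mul i x hx =>
    have hle : (Submodule.span ℂ (Set.range (wordElem θ))).map (LinearMap.mulLeft ℂ (gen θ i)) ≤
        Submodule.span ℂ (Set.range (wordElem θ)) := by
      rw [Submodule.map_span_le]
      rintro _ ⟨w, rfl⟩
      exact Submodule.subset_span ⟨i :: w, wordElem_cons i w⟩
    exact hle ⟨x, hx, rfl⟩

theorem linearMap_ext_word {M : Type*} [AddCommMonoid M] [Module ℂ M] {f g : TV θ →ₗ[ℂ] M}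
    (h : ∀ w, f (wordElem θ w) = g (wordElem θ w)) : f = g :=
  LinearMap.ext_on span_range_wordElem (by rintro _ ⟨w, rfl⟩; exact h w)

theorem wordElem_mem_homogD (w : List (Fin θ)) : wordElem θ w ∈ homogD θ (degW θ w) :=
  Submodule.subset_span ⟨w, rfl, rfl⟩

theorem gen_mem_homogD (i : Fin θ) : gen θ i ∈ homogD θ (δ θ i) := by
  simpa only [wordElem_singleton, degW_singleton] using wordElem_mem_homogD [i]

theorem mul_mem_homogD {a b : Fin θ → ℕ} {u v : TV θ} (hu : u ∈ homogD θ a)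
    (hv : v ∈ homogD θ b) : u * v ∈ homogD θ (a + b) := by
  have h := Submodule.mul_mem_mul hu hv
  rw [homogD, homogD, Submodule.span_mul_span] at h
  refine Submodule.span_mono ?_ h
  rintro _ ⟨_, ⟨v, rfl, rfl⟩, _, ⟨w, rfl, rfl⟩, rfl⟩
  exact ⟨v ++ w, degW_append v w, (wordElem_append v w).symm⟩

theorem brk_mem_homogD (q : Fin θ → Fin θ → ℂˣ) {a b : Fin θ → ℕ} {u v : TV θ}
    (hu : u ∈ homogD θ a) (hv : v ∈ homogD θ b) : brk q a b u v ∈ homogD θ (a + b) :=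
  sub_mem (mul_mem_homogD hu hv)
    (Submodule.smul_mem _ _ (add_comm b a ▸ mul_mem_homogD hv hu))

/-- The algebra endomorphism of `T(V)` multiplying `x_k` by `c_k`. -/
def diagScale (c : Fin θ → ℂ) : TV θ →ₐ[ℂ] TV θ := FreeAlgebra.lift ℂ fun k => c k • gen θ k

@[simp] theorem diagScale_gen (c : Fin θ → ℂ) (k : Fin θ) :
    diagScale c (gen θ k) = c k • gen θ k := by
  simp [diagScale, gen]

theorem diagScale_diagScale (c d : Fin θ → ℂ) (x : TV θ) :
    diagScale c (diagScale d x) = diagScale (c * d) x := by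
  have h : (diagScale c).comp (diagScale d) = diagScale (c * d) :=
    algHom_ext_gen fun k => by simp [smul_smul, mul_comm]
  exact DFunLike.congr_fun h x

theorem diagScale_one (x : TV θ) : diagScale (1 : Fin θ → ℂ) x = x := by
  have h : diagScale (1 : Fin θ → ℂ) = AlgHom.id ℂ (TV θ) := algHom_ext_gen fun k => by simp
  exact DFunLike.congr_fun h x

theorem diagScale_wordElem (c : Fin θ → ℂ) (w : List (Fin θ)) :
    diagScale c (wordElem θ w) = (∏ k, c k ^ degW θ w k) • wordElem θ w := by
  induction w with
  | nil => simp [degW_nil]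
  | cons i w ih =>
    rw [wordElem_cons, map_mul, ih, diagScale_gen, smul_mul_smul_comm, degW_cons]
    congr 1
    simp only [Pi.add_apply, pow_add, Finset.prod_mul_distrib]
    simp [δ, pow_ite]

theorem diagScale_of_mem_homogD (c : Fin θ → ℂ) {d : Fin θ → ℕ} {u : TV θ}
    (hu : u ∈ homogD θ d) : diagScale c u = (∏ k, c k ^ d k) • u := by
  refine LinearMap.eqOn_span (f := (diagScale c).toLinearMap)
    (g := (∏ k, c k ^ d k) • LinearMap.id) ?_ hu
  rintro _ ⟨w, rfl, rfl⟩
  exact diagScale_wordElem c w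

/-- The values `q(a, α_k)` on the simple roots of the character `q(a, ·)`. -/
def rootChar (q : Fin θ → Fin θ → ℂˣ) (a : Fin θ → ℕ) : Fin θ → ℂ :=
  fun k => ∏ i, (q i k : ℂ) ^ a i

theorem qf_eq_prod_rootChar (q : Fin θ → Fin θ → ℂˣ) (a b : Fin θ → ℕ) :
    qf q a b = ∏ k, rootChar q a k ^ b k := by
  rw [qf, Finset.prod_comm]
  refine Finset.prod_congr rfl fun k _ => ?_
  rw [rootChar, ← Finset.prod_pow]
  exact Finset.prod_congr rfl fun i _ => pow_mul _ _ _

theorem rootChar_δ (q : Fin θ → Fin θ → ℂˣ) (i : Fin θ) :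
    rootChar q (δ θ i) = fun k => (q i k : ℂ) := by
  ext k
  simp [rootChar, δ, pow_ite]

theorem rootChar_add (q : Fin θ → Fin θ → ℂˣ) (a b : Fin θ → ℕ) :
    rootChar q (a + b) = rootChar q a * rootChar q b := by
  ext k
  simp [rootChar, pow_add, Finset.prod_mul_distrib]

theorem qf_add_left (q : Fin θ → Fin θ → ℂˣ) (a a' b : Fin θ → ℕ) :
    qf q (a + a') b = qf q a b * qf q a' b := by
  simp only [qf_eq_prod_rootChar, rootChar_add, Pi.mul_apply, mul_pow, Finset.prod_mul_distrib]

theorem qf_zero_left (q : Fin θ → Fin θ → ℂˣ) (b : Fin θ → ℕ) : qf q 0 b = 1 := by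
  simp [qf]

theorem diagScale_rootChar (q : Fin θ → Fin θ → ℂˣ) (a : Fin θ → ℕ) {b : Fin θ → ℕ} {u : TV θ}
    (hu : u ∈ homogD θ b) : diagScale (rootChar q a) u = qf q a b • u := by
  rw [diagScale_of_mem_homogD _ hu, qf_eq_prod_rootChar]

/-- The counit of `T(V)`. -/
def counit (θ : ℕ) : TV θ →ₐ[ℂ] ℂ := FreeAlgebra.lift ℂ 0

@[simp] theorem counit_gen (i : Fin θ) : counit θ (gen θ i) = 0 := by
  simp [counit, gen]

theorem counit_diagScale (c : Fin θ → ℂ) (x : TV θ) : counit θ (diagScale c x) = counit θ x := by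
  have h : (counit θ).comp (diagScale c) = counit θ := algHom_ext_gen fun k => by simp
  exact DFunLike.congr_fun h x

end Words

section BraidedSquare

variable {θ : ℕ}

/-- Left multiplication by `u ⊗ 1` on the braided tensor square of `T(V)`. -/
def leftMul : TV θ →ₐ[ℂ] Module.End ℂ (TV θ ⊗[ℂ] TV θ) :=
  (Module.End.rTensorAlgHom ℂ (TV θ) (TV θ)).comp (Algebra.lmul ℂ (TV θ))

@[simp] theorem leftMul_tmul (u a b : TV θ) : leftMul u (a ⊗ₜ[ℂ] b) = (u * a) ⊗ₜ[ℂ] b :=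
  rfl

theorem leftSlice_leftMul (f : TV θ →ₗ[ℂ] ℂ) (u : TV θ) (t : TV θ ⊗[ℂ] TV θ) :
    leftSlice f (leftMul u t) = leftSlice (f ∘ₗ LinearMap.mulLeft ℂ u) t :=
  leftSlice_map f (LinearMap.mulLeft ℂ u) LinearMap.id t

theorem rightSlice_leftMul (f : TV θ →ₗ[ℂ] ℂ) (u : TV θ) (t : TV θ ⊗[ℂ] TV θ) :
    rightSlice f (leftMul u t) = u * rightSlice f t :=
  rightSlice_map f (LinearMap.mulLeft ℂ u) LinearMap.id t

variable (q : Fin θ → Fin θ → ℂˣ)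

/-- Left multiplication by `1 ⊗ u` on the braided tensor square of `T(V)`. -/
def rightMul : TV θ →ₐ[ℂ] Module.End ℂ (TV θ ⊗[ℂ] TV θ) :=
  FreeAlgebra.lift ℂ fun i => TensorProduct.map (diagScale fun k => (q i k : ℂ)).toLinearMap
    (LinearMap.mulLeft ℂ (gen θ i))

theorem rightMul_gen (i : Fin θ) : rightMul q (gen θ i) =
    TensorProduct.map (diagScale fun k => (q i k : ℂ)).toLinearMap
      (LinearMap.mulLeft ℂ (gen θ i)) := by
  simp [rightMul, gen]

@[simp] theorem rightMul_gen_tmul (i : Fin θ) (a b : TV θ) :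
    rightMul q (gen θ i) (a ⊗ₜ[ℂ] b) =
      diagScale (fun k => (q i k : ℂ)) a ⊗ₜ[ℂ] (gen θ i * b) := by
  simp [rightMul_gen]

theorem leftSlice_rightMul_gen (f : TV θ →ₗ[ℂ] ℂ) (i : Fin θ) (t : TV θ ⊗[ℂ] TV θ) :
    leftSlice f (rightMul q (gen θ i) t) =
      gen θ i * leftSlice (f ∘ₗ (diagScale fun k => (q i k : ℂ)).toLinearMap) t := by
  rw [rightMul_gen, leftSlice_map, LinearMap.mulLeft_apply]

theorem rightSlice_rightMul_gen (f : TV θ →ₗ[ℂ] ℂ) (i : Fin θ) (t : TV θ ⊗[ℂ] TV θ) :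
    rightSlice f (rightMul q (gen θ i) t) =
      diagScale (fun k => (q i k : ℂ)) (rightSlice (f ∘ₗ LinearMap.mulLeft ℂ (gen θ i)) t) := by
  rw [rightMul_gen, rightSlice_map, AlgHom.toLinearMap_apply]

theorem rightMul_gen_mul_leftMul (i : Fin θ) (a : TV θ) :
    rightMul q (gen θ i) * leftMul a =
      leftMul (diagScale (fun k => (q i k : ℂ)) a) * rightMul q (gen θ i) :=
  TensorProduct.ext' fun c d => by simp

theorem rightMul_wordElem_tmul (wb wc : List (Fin θ)) (d : TV θ) :
    rightMul q (wordElem θ wb) (wordElem θ wc ⊗ₜ[ℂ] d) =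
      qf q (degW θ wb) (degW θ wc) • (wordElem θ wc ⊗ₜ[ℂ] (wordElem θ wb * d)) := by
  induction wb with
  | nil => simp [degW_nil, qf_zero_left]
  | cons i w ih =>
    rw [wordElem_cons, map_mul, Module.End.mul_apply, ih, map_smul, rightMul_gen_tmul,
      ← rootChar_δ, diagScale_rootChar q _ (wordElem_mem_homogD wc), ← TensorProduct.smul_tmul',
      smul_smul, degW_cons, qf_add_left, mul_assoc, mul_comm (qf q _ _)]

/-- The multiplication of the braided tensor square. -/
def braidedMul : TV θ ⊗[ℂ] TV θ →ₗ[ℂ] TV θ ⊗[ℂ] TV θ →ₗ[ℂ] TV θ ⊗[ℂ] TV θ :=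
  TensorProduct.lift ((LinearMap.mul ℂ (Module.End ℂ (TV θ ⊗[ℂ] TV θ))).compl₁₂
    leftMul.toLinearMap (rightMul q).toLinearMap)

theorem braidedMul_tmul (a b : TV θ) :
    braidedMul q (a ⊗ₜ[ℂ] b) = leftMul a * rightMul q b := by
  simp [braidedMul]

theorem braidedMul_leftMul (u : TV θ) (s : TV θ ⊗[ℂ] TV θ) :
    braidedMul q (leftMul u s) = leftMul u * braidedMul q s := by
  induction s using TensorProduct.induction_on with
  | zero => simp
  | add s t hs ht => rw [map_add, map_add, hs, ht, map_add, mul_add]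
  | tmul a b => rw [leftMul_tmul, braidedMul_tmul, braidedMul_tmul, map_mul, mul_assoc]

theorem braidedMul_rightMul_gen (i : Fin θ) (s : TV θ ⊗[ℂ] TV θ) :
    braidedMul q (rightMul q (gen θ i) s) = rightMul q (gen θ i) * braidedMul q s := by
  induction s using TensorProduct.induction_on with
  | zero => simp
  | add s t hs ht => rw [map_add, map_add, hs, ht, map_add, mul_add]
  | tmul a b =>
    rw [rightMul_gen_tmul, braidedMul_tmul, braidedMul_tmul, map_mul, ← mul_assoc, ← mul_assoc,
      rightMul_gen_mul_leftMul]

end BraidedSquare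

section Coproduct

variable {θ : ℕ} (q : Fin θ → Fin θ → ℂˣ)

/-- Left multiplication by `Δ(u)` on the braided tensor square of `T(V)`. -/
def coprodMul : TV θ →ₐ[ℂ] Module.End ℂ (TV θ ⊗[ℂ] TV θ) :=
  FreeAlgebra.lift ℂ fun i => leftMul (gen θ i) + rightMul q (gen θ i)

theorem coprodMul_gen (i : Fin θ) :
    coprodMul q (gen θ i) = leftMul (gen θ i) + rightMul q (gen θ i) := by
  simp [coprodMul, gen]

/-- The braided coproduct of `T(V)`. -/
def coprod : TV θ →ₗ[ℂ] TV θ ⊗[ℂ] TV θ :=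
  LinearMap.applyₗ ((1 : TV θ) ⊗ₜ[ℂ] (1 : TV θ)) ∘ₗ (coprodMul q).toLinearMap

theorem coprod_apply (x : TV θ) : coprod q x = coprodMul q x (1 ⊗ₜ[ℂ] 1) := rfl

@[simp] theorem coprod_one : coprod q 1 = 1 ⊗ₜ[ℂ] 1 := by
  simp [coprod_apply]

theorem coprod_mul (x y : TV θ) : coprod q (x * y) = coprodMul q x (coprod q y) := by
  simp [coprod_apply]

theorem coprod_gen_mul (i : Fin θ) (x : TV θ) :
    coprod q (gen θ i * x) =
      leftMul (gen θ i) (coprod q x) + rightMul q (gen θ i) (coprod q x) := by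
  rw [coprod_mul, coprodMul_gen, LinearMap.add_apply]

/-- The braided bialgebra structure of `T(V)`. -/
def braidedStr : BraidedStr θ q where
  Δ := coprod q
  mulB := braidedMul q
  mulB_spec a d wb wc := by
    rw [braidedMul_tmul, Module.End.mul_apply, rightMul_wordElem_tmul, map_smul, leftMul_tmul]
  Δ_one := coprod_one q
  Δ_gen i := by simpa using coprod_gen_mul q i 1
  Δ_mul u v := by
    induction u using gen_induction with
    | one => simp [braidedMul_tmul]
    | add x y hx hy => simp [add_mul, hx, hy]
    | smul c x hx => simp [hx]
    | gen_mul i x hx =>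
      rw [mul_assoc, coprod_gen_mul, hx, coprod_gen_mul, map_add, LinearMap.add_apply,
        braidedMul_leftMul, braidedMul_rightMul_gen, Module.End.mul_apply, Module.End.mul_apply]

variable {q}

namespace BraidedStr

theorem mulB_gen_one (S : BraidedStr θ q) (i : Fin θ) :
    S.mulB (gen θ i ⊗ₜ[ℂ] 1) = leftMul (gen θ i) := by
  refine TensorProduct.ext (linearMap_ext_word fun w => LinearMap.ext fun d => ?_)
  simpa [degW_nil, qf_zero_left] using S.mulB_spec (gen θ i) d [] w

theorem mulB_one_gen (S : BraidedStr θ q) (i : Fin θ) :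
    S.mulB (1 ⊗ₜ[ℂ] gen θ i) = rightMul q (gen θ i) := by
  refine TensorProduct.ext (linearMap_ext_word fun w => LinearMap.ext fun d => ?_)
  have h := rightMul_wordElem_tmul q [i] w d
  rw [wordElem_singleton] at h
  simpa [wordElem_singleton, h] using S.mulB_spec 1 d [i] w

theorem Δ_eq_coprod (S : BraidedStr θ q) : S.Δ = coprod q :=
  linearMap_ext_gen (by rw [S.Δ_one, coprod_one]) fun i x hx => by
    rw [S.Δ_mul, S.Δ_gen, map_add, LinearMap.add_apply, mulB_gen_one, mulB_one_gen,
      coprod_gen_mul, hx]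

end BraidedStr

theorem leftSlice_counit_coprod (x : TV θ) :
    leftSlice (counit θ).toLinearMap (coprod q x) = x := by
  suffices h : leftSlice (counit θ).toLinearMap ∘ₗ coprod q = LinearMap.id from
    DFunLike.congr_fun h x
  refine linearMap_ext_gen (by simp) fun i x hx => ?_
  have hmul : (counit θ).toLinearMap ∘ₗ LinearMap.mulLeft ℂ (gen θ i) = 0 := by ext; simp
  have hscale : (counit θ).toLinearMap ∘ₗ (diagScale fun k => (q i k : ℂ)).toLinearMap =
      (counit θ).toLinearMap := LinearMap.ext (counit_diagScale _)
  rw [LinearMap.comp_apply, LinearMap.id_apply] at hx ⊢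
  rw [coprod_gen_mul, map_add, leftSlice_leftMul, leftSlice_rightMul_gen, hmul, hscale, hx]
  simp [leftSlice]

theorem rightSlice_counit_coprod (x : TV θ) :
    rightSlice (counit θ).toLinearMap (coprod q x) = x := by
  suffices h : rightSlice (counit θ).toLinearMap ∘ₗ coprod q = LinearMap.id from
    DFunLike.congr_fun h x
  refine linearMap_ext_gen (by simp) fun i x hx => ?_
  have hmul : (counit θ).toLinearMap ∘ₗ LinearMap.mulLeft ℂ (gen θ i) = 0 := by ext; simp
  rw [LinearMap.comp_apply, LinearMap.id_apply] at hx ⊢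
  rw [coprod_gen_mul, map_add, rightSlice_leftMul, rightSlice_rightMul_gen, hmul, hx]
  simp [rightSlice]

end Coproduct

section SkewDerivations

variable {θ : ℕ} (q : Fin θ → Fin θ → ℂˣ)

/-- The operator `x ↦ (f ⊗ id)(Δ(x))` on `T(V)`. -/
def coprodSlice (f : TV θ →ₗ[ℂ] ℂ) : TV θ →ₗ[ℂ] TV θ := leftSlice f ∘ₗ coprod q

theorem coprodSlice_apply (f : TV θ →ₗ[ℂ] ℂ) (x : TV θ) :
    coprodSlice q f x = leftSlice f (coprod q x) := rfl

@[simp] theorem coprodSlice_one (f : TV θ →ₗ[ℂ] ℂ) : coprodSlice q f 1 = f 1 • 1 := by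
  simp [coprodSlice]

theorem coprodSlice_counit (x : TV θ) : coprodSlice q (counit θ).toLinearMap x = x :=
  leftSlice_counit_coprod x

theorem coprodSlice_smul (c : ℂ) (f : TV θ →ₗ[ℂ] ℂ) (x : TV θ) :
    coprodSlice q (c • f) x = c • coprodSlice q f x :=
  leftSlice_smul c f _

theorem coprodSlice_gen_mul (f : TV θ →ₗ[ℂ] ℂ) (j : Fin θ) (x : TV θ) :
    coprodSlice q f (gen θ j * x) = coprodSlice q (f ∘ₗ LinearMap.mulLeft ℂ (gen θ j)) x +
      gen θ j * coprodSlice q (f ∘ₗ (diagScale fun k => (q j k : ℂ)).toLinearMap) x := by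
  rw [coprodSlice_apply, coprod_gen_mul, map_add, leftSlice_leftMul, leftSlice_rightMul_gen]
  rfl

theorem coprod_diagScale (c : Fin θ → ℂ) (x : TV θ) : coprod q (diagScale c x) =
    TensorProduct.map (diagScale c).toLinearMap (diagScale c).toLinearMap (coprod q x) := by
  have hleft (j : Fin θ) : c j • leftMul (gen θ j) ∘ₗ
      TensorProduct.map (diagScale c).toLinearMap (diagScale c).toLinearMap =
        TensorProduct.map (diagScale c).toLinearMap (diagScale c).toLinearMap ∘ₗ
          leftMul (gen θ j) :=
    TensorProduct.ext' fun a b => by simp [TensorProduct.smul_tmul']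
  have hright (j : Fin θ) : c j • rightMul q (gen θ j) ∘ₗ
      TensorProduct.map (diagScale c).toLinearMap (diagScale c).toLinearMap =
        TensorProduct.map (diagScale c).toLinearMap (diagScale c).toLinearMap ∘ₗ
          rightMul q (gen θ j) :=
    TensorProduct.ext' fun a b => by simp [diagScale_diagScale, mul_comm c]
  induction x using gen_induction with
  | one => simp
  | add x y hx hy => simp only [map_add, hx, hy]
  | smul r x hx => simp only [map_smul, hx]
  | gen_mul j x hx =>
    rw [map_mul, diagScale_gen, smul_mul_assoc, map_smul, coprod_gen_mul, hx, coprod_gen_mul,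
      smul_add, map_add]
    exact congrArg₂ _ (DFunLike.congr_fun (hleft j) _) (DFunLike.congr_fun (hright j) _)

theorem coprodSlice_diagScale (f : TV θ →ₗ[ℂ] ℂ) (c : Fin θ → ℂ) (x : TV θ) :
    coprodSlice q f (diagScale c x) =
      diagScale c (coprodSlice q (f ∘ₗ (diagScale c).toLinearMap) x) := by
  rw [coprodSlice_apply, coprod_diagScale, leftSlice_map]
  rfl

/-- This is the coassociativity of the coproduct. -/
theorem coprod_coprodSlice (f : TV θ →ₗ[ℂ] ℂ) (x : TV θ) : coprod q (coprodSlice q f x) =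
    TensorProduct.map (coprodSlice q f) LinearMap.id (coprod q x) := by
  induction x using gen_induction generalizing f with
  | one => simp [TensorProduct.smul_tmul']
  | add x y hx hy => simp only [map_add, hx, hy]
  | smul c x hx => simp only [map_smul, hx]
  | gen_mul j x hx =>
    set f₁ := f ∘ₗ LinearMap.mulLeft ℂ (gen θ j) with hf₁
    set f₂ := f ∘ₗ (diagScale fun k => (q j k : ℂ)).toLinearMap with hf₂
    have hleft : TensorProduct.map (coprodSlice q f) LinearMap.id ∘ₗ leftMul (gen θ j) =
        TensorProduct.map (coprodSlice q f₁) LinearMap.id +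
          leftMul (gen θ j) ∘ₗ TensorProduct.map (coprodSlice q f₂) LinearMap.id :=
      TensorProduct.ext' fun a b => by
        simp [coprodSlice_gen_mul, TensorProduct.add_tmul, ← hf₁, ← hf₂]
    have hright : TensorProduct.map (coprodSlice q f) LinearMap.id ∘ₗ rightMul q (gen θ j) =
        rightMul q (gen θ j) ∘ₗ TensorProduct.map (coprodSlice q f₂) LinearMap.id :=
      TensorProduct.ext' fun a b => by simp [coprodSlice_diagScale, ← hf₂]
    rw [coprodSlice_gen_mul, map_add, coprod_gen_mul, coprod_gen_mul, map_add, hx, hx, ← add_assoc]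
    exact (congrArg₂ _ (DFunLike.congr_fun hleft _) (DFunLike.congr_fun hright _)).symm

/-- The convolution product `f_{i_1} * ⋯ * f_{i_n}` of linear functionals attached to a word. -/
def convProd {ι : Type*} (f : ι → TV θ →ₗ[ℂ] ℂ) : List ι → TV θ →ₗ[ℂ] ℂ
  | [] => (counit θ).toLinearMap
  | i :: w => convProd f w ∘ₗ coprodSlice q (f i)

theorem convProd_nil {ι : Type*} (f : ι → TV θ →ₗ[ℂ] ℂ) (x : TV θ) :
    convProd q f [] x = counit θ x := rfl

theorem convProd_cons {ι : Type*} (f : ι → TV θ →ₗ[ℂ] ℂ) (i : ι) (w : List ι) (x : TV θ) :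
    convProd q f (i :: w) x = convProd q f w (coprodSlice q (f i) x) := rfl

theorem convProd_append {ι : Type*} (f : ι → TV θ →ₗ[ℂ] ℂ) (v w : List ι) (x : TV θ) :
    convProd q f (v ++ w) x = convProd q f w (coprodSlice q (convProd q f v) x) := by
  induction v generalizing x with
  | nil => exact congrArg _ (coprodSlice_counit q x).symm
  | cons i v ih =>
    rw [List.cons_append, convProd_cons, ih, coprodSlice_apply, coprod_coprodSlice, leftSlice_map]
    rfl

variable {q}

/-- The algebra map `T(V) → ℂ[ε]` with `x_i ↦ ε` and `x_j ↦ 0` for `j ≠ i`. -/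
def linearPart (i : Fin θ) : TV θ →ₐ[ℂ] TrivSqZeroExt ℂ ℂ :=
  FreeAlgebra.lift ℂ fun j => TrivSqZeroExt.inr (if j = i then 1 else 0)

theorem linearPart_gen (i j : Fin θ) :
    linearPart i (gen θ j) = TrivSqZeroExt.inr (if j = i then 1 else 0) := by
  simp [linearPart, gen]

theorem fst_linearPart (i : Fin θ) (x : TV θ) : (linearPart i x).fst = counit θ x := by
  have h : (TrivSqZeroExt.fstHom ℂ ℂ ℂ).comp (linearPart i) = counit θ :=
    algHom_ext_gen fun j => by
      rw [AlgHom.comp_apply, linearPart_gen, counit_gen, TrivSqZeroExt.fstHom_apply,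
        TrivSqZeroExt.fst_inr]
  exact DFunLike.congr_fun h x

/-- The linear functional on `T(V)` taking the coefficient of the word `x_i`. -/
def genCoeff (i : Fin θ) : TV θ →ₗ[ℂ] ℂ :=
  TrivSqZeroExt.sndHom ℂ ℂ ∘ₗ (linearPart i).toLinearMap

@[simp] theorem genCoeff_one (i : Fin θ) : genCoeff i 1 = 0 := by
  simp [genCoeff]

theorem genCoeff_gen_mul (i j : Fin θ) (x : TV θ) :
    genCoeff i (gen θ j * x) = (if j = i then 1 else 0) * counit θ x := by
  simp only [genCoeff, LinearMap.comp_apply, AlgHom.toLinearMap_apply, map_mul, linearPart_gen,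
    TrivSqZeroExt.sndHom_apply, TrivSqZeroExt.snd_mul, TrivSqZeroExt.fst_inr,
    TrivSqZeroExt.snd_inr, fst_linearPart, smul_eq_mul, op_smul_eq_mul, zero_mul, zero_add]

@[simp] theorem genCoeff_gen (i j : Fin θ) : genCoeff i (gen θ j) = if j = i then 1 else 0 := by
  simpa using genCoeff_gen_mul i j 1

theorem genCoeff_comp_mulLeft_gen (i j : Fin θ) : genCoeff i ∘ₗ LinearMap.mulLeft ℂ (gen θ j) =
    (if j = i then (1 : ℂ) else 0) • (counit θ).toLinearMap :=
  LinearMap.ext (genCoeff_gen_mul i j)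

theorem genCoeff_comp_diagScale (c : Fin θ → ℂ) (i : Fin θ) :
    genCoeff i ∘ₗ (diagScale c).toLinearMap = c i • genCoeff i := by
  refine linearMap_ext_gen (by simp) fun j x _ => ?_
  by_cases h : j = i <;> simp [genCoeff_gen_mul, counit_diagScale, h]

theorem counit_wordElem_eq_zero {w : List (Fin θ)} (h : w ≠ []) :
    counit θ (wordElem θ w) = 0 := by
  obtain ⟨i, w, rfl⟩ := List.exists_cons_of_ne_nil h
  simp [wordElem_cons]

theorem genCoeff_wordElem_eq_zero {i : Fin θ} {w : List (Fin θ)} (h : w.length ≠ 1) :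
    genCoeff i (wordElem θ w) = 0 := by
  match w with
  | [] => simp
  | [j] => simp at h
  | j :: k :: w => simp [wordElem_cons, genCoeff_gen_mul]

variable (q)

/-- The skew derivations of `T(V)`. -/
abbrev skewDer (i : Fin θ) : TV θ →ₗ[ℂ] TV θ := coprodSlice q (genCoeff i)

theorem skewDer_gen_mul (i j : Fin θ) (x : TV θ) : skewDer q i (gen θ j * x) =
    (if j = i then (1 : ℂ) else 0) • x + (q j i : ℂ) • (gen θ j * skewDer q i x) := by
  rw [coprodSlice_gen_mul, genCoeff_comp_mulLeft_gen, genCoeff_comp_diagScale, coprodSlice_smul,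
    coprodSlice_smul, coprodSlice_counit, mul_smul_comm]

theorem skewDer_diagScale (c : Fin θ → ℂ) (i : Fin θ) (x : TV θ) :
    skewDer q i (diagScale c x) = c i • diagScale c (skewDer q i x) := by
  rw [coprodSlice_diagScale, genCoeff_comp_diagScale, coprodSlice_smul, map_smul]

theorem skewDer_mul (i : Fin θ) (x y : TV θ) : skewDer q i (x * y) =
    skewDer q i x * y + diagScale (fun k => (q k i : ℂ)) x * skewDer q i y := by
  induction x using gen_induction with
  | one => simp
  | add x x' hx hx' => simp only [add_mul, map_add, hx, hx']; abel
  | smul c x hx => simp only [smul_mul_assoc, map_smul, hx, smul_add]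
  | gen_mul j x hx =>
    rw [mul_assoc, skewDer_gen_mul, hx, skewDer_gen_mul, map_mul, diagScale_gen]
    simp only [add_mul, mul_add, smul_add, smul_mul_assoc, mul_assoc, add_assoc]

/-- The functionals on `T(V)` given by iterated skew derivations. -/
abbrev dualWord : List (Fin θ) → TV θ →ₗ[ℂ] ℂ := convProd q genCoeff

theorem dualWord_singleton (i : Fin θ) (x : TV θ) : dualWord q [i] x = genCoeff i x := by
  rw [convProd_cons, convProd_nil, ← AlgHom.toLinearMap_apply, coprodSlice_apply,
    apply_leftSlice_eq_apply_rightSlice, rightSlice_counit_coprod]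

theorem dualWord_diagScale (c : Fin θ → ℂ) (w : List (Fin θ)) (x : TV θ) :
    dualWord q w (diagScale c x) = (w.map c).prod * dualWord q w x := by
  induction w generalizing x with
  | nil => simp [convProd_nil, counit_diagScale]
  | cons i w ih => simp [convProd_cons, skewDer_diagScale, ih, mul_assoc]

end SkewDerivations

section WordLength

variable {θ : ℕ} {q : Fin θ → Fin θ → ℂˣ}

/-- The component of total degree `n` of `T(V) ⊗ T(V)`. -/
def wordTensors (θ n : ℕ) : Submodule ℂ (TV θ ⊗[ℂ] TV θ) :=
  Submodule.span ℂ {t | ∃ a b : List (Fin θ), a.length + b.length = n ∧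
    t = wordElem θ a ⊗ₜ[ℂ] wordElem θ b}

theorem tmul_mem_wordTensors (a b : List (Fin θ)) :
    wordElem θ a ⊗ₜ[ℂ] wordElem θ b ∈ wordTensors θ (a.length + b.length) :=
  Submodule.subset_span ⟨a, b, rfl, rfl⟩

theorem map_coprodMul_gen_wordTensors_le (i : Fin θ) (n : ℕ) :
    (wordTensors θ n).map (coprodMul q (gen θ i)) ≤ wordTensors θ (n + 1) := by
  rw [wordTensors, Submodule.map_span_le]
  rintro _ ⟨a, b, rfl, rfl⟩
  rw [coprodMul_gen, LinearMap.add_apply, leftMul_tmul, rightMul_gen_tmul, diagScale_wordElem,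
    ← TensorProduct.smul_tmul', ← wordElem_cons, ← wordElem_cons]
  have hleft := tmul_mem_wordTensors (i :: a) b
  have hright := tmul_mem_wordTensors a (i :: b)
  rw [List.length_cons, add_right_comm] at hleft
  exact add_mem hleft (Submodule.smul_mem _ _ hright)

theorem coprod_wordElem_mem (w : List (Fin θ)) :
    coprod q (wordElem θ w) ∈ wordTensors θ w.length := by
  induction w with
  | nil => simpa using tmul_mem_wordTensors (θ := θ) [] []
  | cons i w ih =>
    rw [wordElem_cons, coprod_mul]
    exact map_coprodMul_gen_wordTensors_le i w.length ⟨_, ih, rfl⟩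

theorem eq_of_mem_wordTensors {M : Type*} [AddCommGroup M] [Module ℂ M] {n : ℕ}
    {f g : TV θ ⊗[ℂ] TV θ →ₗ[ℂ] M}
    (h : ∀ a b : List (Fin θ), a.length + b.length = n →
      f (wordElem θ a ⊗ₜ[ℂ] wordElem θ b) = g (wordElem θ a ⊗ₜ[ℂ] wordElem θ b))
    {t : TV θ ⊗[ℂ] TV θ} (ht : t ∈ wordTensors θ n) : f t = g t := by
  refine LinearMap.eqOn_span ?_ ht
  rintro _ ⟨a, b, hab, rfl⟩
  exact h a b hab

theorem dualWord_wordElem_eq_zero {v w : List (Fin θ)} (h : v.length ≠ w.length) :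
    dualWord q v (wordElem θ w) = 0 := by
  induction v generalizing w with
  | nil => exact counit_wordElem_eq_zero fun hw => h (by simp [hw])
  | cons i v ih =>
    refine eq_of_mem_wordTensors (f := dualWord q v ∘ₗ leftSlice (genCoeff i)) (g := 0) ?_
      (coprod_wordElem_mem w)
    intro a b hab
    by_cases ha : a.length = 1
    · have hb : v.length ≠ b.length := by rw [List.length_cons] at h; omega
      simp [ih hb]
    · simp [genCoeff_wordElem_eq_zero ha]

theorem dualWord_eq_zero_of_mem_homogTot {n : ℕ} {x : TV θ} (hx : x ∈ homogTot θ n)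
    {w : List (Fin θ)} (hw : w.length ≠ n) : dualWord q w x = 0 := by
  refine Submodule.span_le (p := LinearMap.ker (dualWord q w)).2 ?_ hx
  rintro _ ⟨v, rfl, rfl⟩
  exact dualWord_wordElem_eq_zero hw

theorem dualWord_eq_zero_of_mem_Wfil {n : ℕ} {x : TV θ} (hx : x ∈ Wfil θ n) {w : List (Fin θ)}
    (hw : n < w.length) : dualWord q w x = 0 := by
  refine Submodule.span_le (p := LinearMap.ker (dualWord q w)).2 ?_ hx
  rintro _ ⟨v, hv, rfl⟩
  exact dualWord_wordElem_eq_zero (by omega)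

theorem convProd_wordElem_eq_dualWord {f : Fin θ → TV θ →ₗ[ℂ] ℂ} (hf1 : ∀ i, f i 1 = 0)
    (hf : ∀ i j, f i (gen θ j) = if j = i then 1 else 0) {v w : List (Fin θ)}
    (hvw : v.length ≤ w.length) :
    convProd q f w (wordElem θ v) = dualWord q w (wordElem θ v) := by
  induction w generalizing v with
  | nil => rfl
  | cons i w ih =>
    refine eq_of_mem_wordTensors (f := convProd q f w ∘ₗ leftSlice (f i))
      (g := dualWord q w ∘ₗ leftSlice (genCoeff i)) ?_ (coprod_wordElem_mem v)
    intro a b hab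
    rw [List.length_cons] at hvw
    simp only [LinearMap.comp_apply, leftSlice_tmul, map_smul]
    match a with
    | [] => simp [hf1]
    | [j] => rw [ih (by simp at hab; omega), wordElem_singleton, hf, genCoeff_gen]
    | j :: k :: a =>
      have hb : b.length < w.length := by simp at hab; omega
      rw [ih hb.le, dualWord_wordElem_eq_zero hb.ne', smul_zero, smul_zero]

theorem convProd_eq_dualWord_of_mem_Wfil {f : Fin θ → TV θ →ₗ[ℂ] ℂ} (hf1 : ∀ i, f i 1 = 0)
    (hf : ∀ i j, f i (gen θ j) = if j = i then 1 else 0) {w : List (Fin θ)} {x : TV θ}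
    (hx : x ∈ Wfil θ w.length) : convProd q f w x = dualWord q w x := by
  refine LinearMap.eqOn_span ?_ hx
  rintro _ ⟨v, hv, rfl⟩
  exact convProd_wordElem_eq_dualWord hf1 hf hv

end WordLength

section QuotientSlices

variable {R M M' : Type*} [CommRing R] [AddCommGroup M] [Module R M] [AddCommGroup M'] [Module R M']

theorem leftSlice_liftQ_map {I : Submodule R M} {f : M →ₗ[R] R} (hf : I ≤ LinearMap.ker f)
    (J : Submodule R M') (t : M ⊗[R] M') :
    leftSlice (I.liftQ f hf) (TensorProduct.map I.mkQ J.mkQ t) = J.mkQ (leftSlice f t) := by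
  rw [leftSlice_map, Submodule.liftQ_mkQ]

theorem rightSlice_liftQ_map (I : Submodule R M) {J : Submodule R M'} {f : M' →ₗ[R] R}
    (hf : J ≤ LinearMap.ker f) (t : M ⊗[R] M') :
    rightSlice (J.liftQ f hf) (TensorProduct.map I.mkQ J.mkQ t) = I.mkQ (rightSlice f t) := by
  rw [rightSlice_map, Submodule.liftQ_mkQ]

end QuotientSlices

section Radical

variable {θ : ℕ}

theorem mixedSub_eq_ker (I : Submodule ℂ (TV θ)) :
    mixedSub I = LinearMap.ker (TensorProduct.map I.mkQ I.mkQ) := by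
  apply le_antisymm
  · refine Submodule.span_le.2 ?_
    rintro _ (⟨a, b, ha, rfl⟩ | ⟨a, b, hb, rfl⟩)
    · simp [(Submodule.Quotient.mk_eq_zero I).2 ha]
    · simp [(Submodule.Quotient.mk_eq_zero I).2 hb]
  · have hex : Function.Exact I.subtype I.mkQ := LinearMap.exact_subtype_mkQ I
    rw [TensorProduct.map_ker hex I.mkQ_surjective hex I.mkQ_surjective]
    refine sup_le ?_ ?_
    · rintro _ ⟨t, rfl⟩
      induction t using TensorProduct.induction_on with
      | zero => simp
      | add s t hs ht => rw [map_add]; exact add_mem hs ht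
      | tmul a b => exact Submodule.subset_span (Or.inr ⟨a, b, b.2, rfl⟩)
    · rintro _ ⟨t, rfl⟩
      induction t using TensorProduct.induction_on with
      | zero => simp
      | add s t hs ht => rw [map_add]; exact add_mem hs ht
      | tmul a b => exact Submodule.subset_span (Or.inl ⟨a, b, a.2, rfl⟩)

/-- The common kernel of the functionals `dualWord`, which is the ideal `J_q`. -/
def pairingRadical (q : Fin θ → Fin θ → ℂˣ) : Submodule ℂ (TV θ) :=
  ⨅ w, LinearMap.ker (dualWord q w)

variable {q : Fin θ → Fin θ → ℂˣ}

theorem mem_pairingRadical {x : TV θ} : x ∈ pairingRadical q ↔ ∀ w, dualWord q w x = 0 := by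
  simp [pairingRadical]

theorem skewDer_mem_pairingRadical {x : TV θ} (hx : x ∈ pairingRadical q) (i : Fin θ) :
    skewDer q i x ∈ pairingRadical q :=
  mem_pairingRadical.2 fun w => mem_pairingRadical.1 hx (i :: w)

theorem diagScale_mem_pairingRadical {x : TV θ} (hx : x ∈ pairingRadical q) (c : Fin θ → ℂ) :
    diagScale c x ∈ pairingRadical q :=
  mem_pairingRadical.2 fun w => by rw [dualWord_diagScale, mem_pairingRadical.1 hx, mul_zero]

theorem gen_mul_mem_pairingRadical (j : Fin θ) {x : TV θ} (hx : x ∈ pairingRadical q) :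
    gen θ j * x ∈ pairingRadical q := by
  refine mem_pairingRadical.2 fun w => ?_
  induction w generalizing x with
  | nil => simp [convProd_nil]
  | cons i w ih =>
    rw [convProd_cons, skewDer_gen_mul, map_add, map_smul, map_smul,
      ih (skewDer_mem_pairingRadical hx i), mem_pairingRadical.1 hx, smul_zero, smul_zero, add_zero]

theorem mul_left_mem_pairingRadical (a x : TV θ) (hx : x ∈ pairingRadical q) :
    a * x ∈ pairingRadical q := by
  induction a using gen_induction with
  | one => rwa [one_mul]
  | add a b ha hb => rw [add_mul]; exact add_mem ha hb
  | smul c a ha => rw [smul_mul_assoc]; exact Submodule.smul_mem _ _ ha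
  | gen_mul j a ha => rw [mul_assoc]; exact gen_mul_mem_pairingRadical j ha

theorem mul_right_mem_pairingRadical (a x : TV θ) (hx : x ∈ pairingRadical q) :
    x * a ∈ pairingRadical q := by
  refine mem_pairingRadical.2 fun w => ?_
  induction w generalizing x a with
  | nil =>
    have h0 : counit θ x = 0 := mem_pairingRadical.1 hx []
    rw [convProd_nil, map_mul, h0, zero_mul]
  | cons i w ih =>
    rw [convProd_cons, skewDer_mul, map_add, ih _ _ (skewDer_mem_pairingRadical hx i),
      ih _ _ (diagScale_mem_pairingRadical hx _), add_zero]

theorem coprod_mem_mixedSub_pairingRadical {x : TV θ} (hx : x ∈ pairingRadical q) :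
    coprod q x ∈ mixedSub (pairingRadical q) := by
  rw [mixedSub_eq_ker, LinearMap.mem_ker]
  have hle (w) : pairingRadical q ≤ LinearMap.ker (dualWord q w) := iInf_le _ w
  have hsep (y : TV θ ⧸ pairingRadical q)
      (hy : ∀ w, (pairingRadical q).liftQ (dualWord q w) (hle w) y = 0) : y = 0 := by
    obtain ⟨y, rfl⟩ := (pairingRadical q).mkQ_surjective y
    exact (Submodule.Quotient.mk_eq_zero _).2 (mem_pairingRadical.2 hy)
  refine tensor_eq_zero_of_separating hsep hsep fun v w => ?_
  rw [leftSlice_liftQ_map, Submodule.mkQ_apply, Submodule.liftQ_apply, ← coprodSlice_apply,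
    ← convProd_append]
  exact mem_pairingRadical.1 hx _

theorem exists_homog_decomposition (x : TV θ) :
    ∃ f : ℕ →₀ TV θ, (∀ n, f n ∈ homogTot θ n) ∧ (f.sum fun _ y => y) = x := by
  rw [← Submodule.mem_iSup_iff_exists_finsupp]
  suffices h : (⨆ n, homogTot θ n).mkQ = 0 by
    rw [← Submodule.Quotient.mk_eq_zero]
    exact DFunLike.congr_fun h x
  refine linearMap_ext_word fun w => (Submodule.Quotient.mk_eq_zero _).2 ?_
  exact Submodule.mem_iSup_of_mem w.length (Submodule.subset_span ⟨w, rfl, rfl⟩)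

theorem dualWord_sum {f : ℕ →₀ TV θ} (hf : ∀ n, f n ∈ homogTot θ n) (w : List (Fin θ)) :
    dualWord q w (f.sum fun _ y => y) = dualWord q w (f w.length) := by
  rw [map_finsuppSum]
  exact Finsupp.sum_eq_single w.length
    (fun n _ hn => dualWord_eq_zero_of_mem_homogTot (hf n) hn.symm) fun _ => map_zero _

theorem homogTot_le_Wfil {m n : ℕ} (h : m ≤ n) : homogTot θ m ≤ Wfil θ n := by
  refine Submodule.span_mono ?_
  rintro _ ⟨w, hw, rfl⟩
  exact ⟨w, hw.trans_le h, rfl⟩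

theorem eq_counit_add_sum_genCoeff {x : TV θ} (hx : x ∈ Wfil θ 1) :
    x = counit θ x • 1 + ∑ i, genCoeff i x • gen θ i := by
  let g : TV θ →ₗ[ℂ] TV θ :=
    (counit θ).toLinearMap.smulRight 1 + ∑ i, (genCoeff i).smulRight (gen θ i)
  suffices h : LinearMap.id (R := ℂ) x = g x by simpa [g] using h
  refine LinearMap.eqOn_span ?_ hx
  rintro _ ⟨w, hw, rfl⟩
  match w with
  | [] => simp [g]
  | [j] => simp [g, wordElem_singleton]

theorem eq_zero_of_mem_Wfil_one {x : TV θ} (hx : x ∈ Wfil θ 1) (h0 : counit θ x = 0)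
    (h1 : ∀ i, genCoeff i x = 0) : x = 0 := by
  simpa [h0, h1] using eq_counit_add_sum_genCoeff hx

theorem eq_zero_of_mem_pairingRadical_of_mem_Wfil_one {x : TV θ} (hx : x ∈ pairingRadical q)
    (h1 : x ∈ Wfil θ 1) : x = 0 :=
  eq_zero_of_mem_Wfil_one h1 (mem_pairingRadical.1 hx []) fun i => by
    rw [← dualWord_singleton q]
    exact mem_pairingRadical.1 hx [i]

theorem mem_pairingRadical_of_mem_homogTot {n : ℕ} {x : TV θ} (hx : x ∈ homogTot θ n)
    (h : ∀ w : List (Fin θ), w.length = n → dualWord q w x = 0) : x ∈ pairingRadical q :=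
  mem_pairingRadical.2 fun w =>
    if hw : w.length = n then h w hw else dualWord_eq_zero_of_mem_homogTot hx hw

theorem mem_pairingRadical_of_sum_mem {f : ℕ →₀ TV θ} (hf : ∀ n, f n ∈ homogTot θ n)
    (hx : (f.sum fun _ y => y) ∈ pairingRadical q) (n : ℕ) : f n ∈ pairingRadical q :=
  mem_pairingRadical_of_mem_homogTot (hf n) fun w hw => by
    rw [← hw, ← dualWord_sum hf]
    exact mem_pairingRadical.1 hx w

theorem pairingRadical_isPreNicholsIdeal (S : BraidedStr θ q) :
    IsPreNicholsIdeal S (pairingRadical q) where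
  mul_left := mul_left_mem_pairingRadical
  mul_right := mul_right_mem_pairingRadical
  coideal x hx := S.Δ_eq_coprod ▸ coprod_mem_mixedSub_pairingRadical hx
  homog_ge2 := by
    refine le_antisymm (fun x hx => ?_) (Submodule.span_le.2 fun x hx => hx.1)
    obtain ⟨f, hf, rfl⟩ := exists_homog_decomposition x
    refine Submodule.sum_mem _ fun n _ => ?_
    have hfn := mem_pairingRadical_of_sum_mem hf hx n
    by_cases hn : 2 ≤ n
    · exact Submodule.subset_span ⟨hfn, n, hn, hf n⟩
    · have h1 : f n ∈ Wfil θ 1 := homogTot_le_Wfil (by omega) (hf n)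
      rw [eq_zero_of_mem_pairingRadical_of_mem_Wfil_one hfn h1]
      exact zero_mem _

theorem pairingRadical_le_Jq (S : BraidedStr θ q) : pairingRadical q ≤ Jq S :=
  le_sSup (pairingRadical_isPreNicholsIdeal S)

end Radical

section Quotient

variable {θ : ℕ} {q : Fin θ → Fin θ → ℂˣ} {S : BraidedStr θ q} {I : Submodule ℂ (TV θ)}

theorem rootChar_zero (q : Fin θ → Fin θ → ℂˣ) : rootChar q 0 = 1 := by
  ext k; simp [rootChar]

/-- The submonoid of those `c` for which `diagScale c` preserves `I`. -/
def scaleStable (I : Submodule ℂ (TV θ)) : Submonoid (Fin θ → ℂ) where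
  carrier := {c | ∀ x ∈ I, diagScale c x ∈ I}
  one_mem' x hx := by rwa [diagScale_one]
  mul_mem' hc hd x hx := by rw [← diagScale_diagScale]; exact hc _ (hd _ hx)

namespace IsPreNicholsIdeal

theorem dualWord_eq_zero (hI : IsPreNicholsIdeal S I) {x : TV θ} (hx : x ∈ I) {w : List (Fin θ)}
    (hw : w.length ≤ 1) : dualWord q w x = 0 := by
  rw [hI.homog_ge2] at hx
  refine Submodule.span_le (p := LinearMap.ker (dualWord q w)).2 ?_ hx
  rintro y ⟨-, n, hn, hy⟩
  exact dualWord_eq_zero_of_mem_homogTot hy (by omega)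

theorem counit_eq_zero (hI : IsPreNicholsIdeal S I) {x : TV θ} (hx : x ∈ I) : counit θ x = 0 :=
  hI.dualWord_eq_zero hx (w := []) zero_le_one

theorem genCoeff_eq_zero (hI : IsPreNicholsIdeal S I) {x : TV θ} (hx : x ∈ I) (i : Fin θ) :
    genCoeff i x = 0 := by
  rw [← dualWord_singleton q]
  exact hI.dualWord_eq_zero hx le_rfl

theorem map_coprod_eq_zero (hI : IsPreNicholsIdeal S I) {x : TV θ} (hx : x ∈ I) :
    TensorProduct.map I.mkQ I.mkQ (coprod q x) = 0 := by
  rw [← LinearMap.mem_ker, ← mixedSub_eq_ker, ← S.Δ_eq_coprod]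
  exact hI.coideal x hx

theorem leftSlice_coprod_mem (hI : IsPreNicholsIdeal S I) {f : TV θ →ₗ[ℂ] ℂ}
    (hf : I ≤ LinearMap.ker f) {x : TV θ} (hx : x ∈ I) : leftSlice f (coprod q x) ∈ I := by
  rw [← Submodule.Quotient.mk_eq_zero, ← Submodule.mkQ_apply, ← leftSlice_liftQ_map hf,
    hI.map_coprod_eq_zero hx, map_zero]

theorem rightSlice_coprod_mem (hI : IsPreNicholsIdeal S I) {f : TV θ →ₗ[ℂ] ℂ}
    (hf : I ≤ LinearMap.ker f) {x : TV θ} (hx : x ∈ I) : rightSlice f (coprod q x) ∈ I := by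
  rw [← Submodule.Quotient.mk_eq_zero, ← Submodule.mkQ_apply, ← rightSlice_liftQ_map I hf,
    hI.map_coprod_eq_zero hx, map_zero]

theorem convProd_eq_zero {ι : Type*} (hI : IsPreNicholsIdeal S I) {f : ι → TV θ →ₗ[ℂ] ℂ}
    (hf : ∀ i, I ≤ LinearMap.ker (f i)) {x : TV θ} (hx : x ∈ I) (w : List ι) :
    convProd q f w x = 0 := by
  induction w generalizing x with
  | nil => exact hI.counit_eq_zero hx
  | cons i _ ih => exact ih (hI.leftSlice_coprod_mem (hf i) hx)

theorem row_mem_scaleStable (hI : IsPreNicholsIdeal S I) (j : Fin θ) :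
    (fun k => (q j k : ℂ)) ∈ scaleStable I := by
  intro x hx
  have hker : I ≤ LinearMap.ker (genCoeff j) := fun y hy => hI.genCoeff_eq_zero hy j
  have hsplit : rightSlice (genCoeff j) (coprod q (gen θ j * x)) =
      gen θ j * rightSlice (genCoeff j) (coprod q x) + diagScale (fun k => (q j k : ℂ)) x := by
    rw [coprod_gen_mul, map_add, rightSlice_leftMul, rightSlice_rightMul_gen,
      genCoeff_comp_mulLeft_gen, if_pos rfl, one_smul, rightSlice_counit_coprod]
  have h1 := hI.rightSlice_coprod_mem hker (hI.mul_left (gen θ j) x hx)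
  have h2 := hI.mul_left (gen θ j) _ (hI.rightSlice_coprod_mem hker hx)
  rw [hsplit] at h1
  exact (Submodule.add_mem_iff_right _ h2).1 h1

theorem rootChar_mem_scaleStable (hI : IsPreNicholsIdeal S I) (β : Fin θ → ℕ) :
    rootChar q β ∈ scaleStable I := by
  have h : rootChar q β = ∏ i, (fun k => (q i k : ℂ)) ^ β i := by
    ext k
    simp [rootChar]
  rw [h]
  exact Submonoid.prod_mem _ fun i _ => Submonoid.pow_mem _ (hI.row_mem_scaleStable i) _

/-- The action of `T(V)` on `T(V)/I` by left multiplication. -/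
def quotMul (hI : IsPreNicholsIdeal S I) : TV θ →ₐ[ℂ] Module.End ℂ (TV θ ⧸ I) :=
  FreeAlgebra.lift ℂ fun i =>
    I.mapQ I (LinearMap.mulLeft ℂ (gen θ i)) fun x hx => hI.mul_left (gen θ i) x hx

theorem quotMul_mk (hI : IsPreNicholsIdeal S I) (u x : TV θ) :
    hI.quotMul u (I.mkQ x) = I.mkQ (u * x) := by
  induction u using gen_induction with
  | one => simp
  | add u v hu hv => rw [map_add, LinearMap.add_apply, hu, hv, add_mul, map_add]
  | smul c u hu => rw [map_smul, LinearMap.smul_apply, hu, smul_mul_assoc, map_smul]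
  | gen_mul i u hu =>
    rw [map_mul, Module.End.mul_apply, hu, mul_assoc]
    simp [quotMul, gen]

theorem quotMul_eq_zero (hI : IsPreNicholsIdeal S I) {u : TV θ} (hu : u ∈ I) :
    hI.quotMul u = 0 := by
  ext x
  exact (hI.quotMul_mk u x).trans ((Submodule.Quotient.mk_eq_zero I).2 (hI.mul_right x u hu))

/-- The diagonal endomorphism of `T(V)/I` given by the character `q(β, ·)`. -/
def quotScale (hI : IsPreNicholsIdeal S I) (β : Fin θ → ℕ) : Module.End ℂ (TV θ ⧸ I) :=
  I.mapQ I (diagScale (rootChar q β)).toLinearMap (hI.rootChar_mem_scaleStable β)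

theorem quotScale_mk (hI : IsPreNicholsIdeal S I) (β : Fin θ → ℕ) (x : TV θ) :
    hI.quotScale β (I.mkQ x) = I.mkQ (diagScale (rootChar q β) x) := rfl

theorem quotScale_zero (hI : IsPreNicholsIdeal S I) : hI.quotScale 0 = 1 := by
  refine Submodule.linearMap_qext I (LinearMap.ext fun x => ?_)
  rw [LinearMap.comp_apply, quotScale_mk, rootChar_zero, diagScale_one]
  rfl

theorem quotScale_add (hI : IsPreNicholsIdeal S I) (β γ : Fin θ → ℕ) :
    hI.quotScale (β + γ) = hI.quotScale β * hI.quotScale γ := by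
  refine Submodule.linearMap_qext I (LinearMap.ext fun x => ?_)
  rw [LinearMap.comp_apply, LinearMap.comp_apply, Module.End.mul_apply, quotScale_mk, quotScale_mk,
    quotScale_mk, diagScale_diagScale, rootChar_add]

/-- Left multiplication by `u ⊗ 1` on the braided tensor square of `T(V)/I`. -/
def quotLeft (hI : IsPreNicholsIdeal S I) :
    TV θ →ₐ[ℂ] Module.End ℂ ((TV θ ⧸ I) ⊗[ℂ] (TV θ ⧸ I)) :=
  (Module.End.rTensorAlgHom ℂ (TV θ ⧸ I) (TV θ ⧸ I)).comp hI.quotMul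

theorem quotLeft_eq (hI : IsPreNicholsIdeal S I) (u : TV θ) :
    hI.quotLeft u = TensorProduct.map (hI.quotMul u) LinearMap.id := rfl

/-- Left multiplication by `1 ⊗ u` on the braided tensor square of `T(V)/I`. -/
def quotRight (hI : IsPreNicholsIdeal S I) :
    TV θ →ₐ[ℂ] Module.End ℂ ((TV θ ⧸ I) ⊗[ℂ] (TV θ ⧸ I)) :=
  FreeAlgebra.lift ℂ fun i => TensorProduct.map (hI.quotScale (δ θ i)) (hI.quotMul (gen θ i))

theorem quotRight_gen (hI : IsPreNicholsIdeal S I) (i : Fin θ) : hI.quotRight (gen θ i) =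
    TensorProduct.map (hI.quotScale (δ θ i)) (hI.quotMul (gen θ i)) := by
  simp [quotRight, gen]

theorem quotRight_wordElem (hI : IsPreNicholsIdeal S I) (w : List (Fin θ)) :
    hI.quotRight (wordElem θ w) =
      TensorProduct.map (hI.quotScale (degW θ w)) (hI.quotMul (wordElem θ w)) := by
  induction w with
  | nil =>
    rw [wordElem_nil, map_one, map_one, degW_nil, quotScale_zero]
    exact TensorProduct.map_one.symm
  | cons i w ih =>
    rw [wordElem_cons, map_mul, map_mul, ih, quotRight_gen, ← TensorProduct.map_mul, degW_cons,
      quotScale_add]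

theorem quotRight_eq (hI : IsPreNicholsIdeal S I) {β : Fin θ → ℕ} {u : TV θ}
    (hu : u ∈ homogD θ β) :
    hI.quotRight u = TensorProduct.map (hI.quotScale β) (hI.quotMul u) := by
  refine LinearMap.eqOn_span (f := hI.quotRight.toLinearMap)
    (g := TensorProduct.mapBilinear _ _ _ _ _ (hI.quotScale β) ∘ₗ hI.quotMul.toLinearMap) ?_ hu
  rintro _ ⟨w, rfl, rfl⟩
  exact hI.quotRight_wordElem w

theorem quotRight_mul_quotLeft (hI : IsPreNicholsIdeal S I) {a b : Fin θ → ℕ} {u v : TV θ}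
    (hu : u ∈ homogD θ a) (hv : v ∈ homogD θ b) :
    hI.quotRight u * hI.quotLeft v = qf q a b • (hI.quotLeft v * hI.quotRight u) := by
  rw [hI.quotRight_eq hu, hI.quotLeft_eq]
  refine TensorProduct.ext' fun x y => ?_
  obtain ⟨x, rfl⟩ := I.mkQ_surjective x
  simp only [Module.End.mul_apply, LinearMap.smul_apply, TensorProduct.map_tmul,
    LinearMap.id_apply, quotScale_mk, quotMul_mk, map_mul, diagScale_rootChar q a hv,
    TensorProduct.smul_tmul', smul_mul_assoc, map_smul]

/-- The action of `T(V)` on the braided tensor square of `T(V)/I` through the coproduct. -/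
def quotCoprod (hI : IsPreNicholsIdeal S I) :
    TV θ →ₐ[ℂ] Module.End ℂ ((TV θ ⧸ I) ⊗[ℂ] (TV θ ⧸ I)) :=
  FreeAlgebra.lift ℂ fun i => hI.quotLeft (gen θ i) + hI.quotRight (gen θ i)

theorem quotCoprod_gen (hI : IsPreNicholsIdeal S I) (i : Fin θ) :
    hI.quotCoprod (gen θ i) = hI.quotLeft (gen θ i) + hI.quotRight (gen θ i) := by
  simp [quotCoprod, gen]

theorem quotCoprod_gen_map (hI : IsPreNicholsIdeal S I) (i : Fin θ) (t : TV θ ⊗[ℂ] TV θ) :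
    hI.quotCoprod (gen θ i) (TensorProduct.map I.mkQ I.mkQ t) =
      TensorProduct.map I.mkQ I.mkQ (coprodMul q (gen θ i) t) := by
  suffices h : hI.quotCoprod (gen θ i) ∘ₗ TensorProduct.map I.mkQ I.mkQ =
      TensorProduct.map I.mkQ I.mkQ ∘ₗ coprodMul q (gen θ i) from DFunLike.congr_fun h t
  refine TensorProduct.ext' fun a b => ?_
  simp only [quotCoprod_gen, coprodMul_gen, quotLeft_eq, quotRight_gen, LinearMap.comp_apply,
    LinearMap.add_apply, TensorProduct.map_tmul, LinearMap.id_apply, quotScale_mk, quotMul_mk,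
    map_add, leftMul_tmul, rightMul_gen_tmul, rootChar_δ]

theorem quotCoprod_map (hI : IsPreNicholsIdeal S I) (u : TV θ) (t : TV θ ⊗[ℂ] TV θ) :
    hI.quotCoprod u (TensorProduct.map I.mkQ I.mkQ t) =
      TensorProduct.map I.mkQ I.mkQ (coprodMul q u t) := by
  induction u using gen_induction generalizing t with
  | one => simp
  | add u v hu hv => simp only [map_add, LinearMap.add_apply, hu, hv]
  | smul c u hu => simp only [map_smul, LinearMap.smul_apply, hu]
  | gen_mul i u hu =>
    rw [map_mul, Module.End.mul_apply, hu, quotCoprod_gen_map, map_mul, Module.End.mul_apply]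

/-- The class of `u` in `T(V)/I` is primitive, expressed by means of multiplication operators. -/
def IsPrimitiveMod (hI : IsPreNicholsIdeal S I) (u : TV θ) : Prop :=
  hI.quotCoprod u = hI.quotLeft u + hI.quotRight u

theorem isPrimitiveMod_gen (hI : IsPreNicholsIdeal S I) (i : Fin θ) :
    hI.IsPrimitiveMod (gen θ i) :=
  hI.quotCoprod_gen i

theorem isPrimitiveMod_brk (hI : IsPreNicholsIdeal S I) {a b : Fin θ → ℕ} {u v : TV θ}
    (hu : u ∈ homogD θ a) (hv : v ∈ homogD θ b) (pu : hI.IsPrimitiveMod u)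
    (pv : hI.IsPrimitiveMod v) (hab : qf q a b * qf q b a = 1) :
    hI.IsPrimitiveMod (brk q a b u v) := by
  have huv : hI.quotRight u * hI.quotLeft v = qf q a b • (hI.quotLeft v * hI.quotRight u) :=
    hI.quotRight_mul_quotLeft hu hv
  have hvu : qf q a b • (hI.quotRight v * hI.quotLeft u) = hI.quotLeft u * hI.quotRight v := by
    rw [hI.quotRight_mul_quotLeft hv hu, smul_smul, hab, one_smul]
  simp only [IsPrimitiveMod, brk, map_sub, map_mul, map_smul] at *
  rw [pu, pv]
  simp only [mul_add, add_mul, smul_add, huv, hvu]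
  abel

end IsPreNicholsIdeal

end Quotient

section FinrankMap

variable {K M M' M'' F : Type*} [Field K] [AddCommGroup M] [Module K M] [AddCommGroup M']
  [Module K M'] [AddCommGroup M''] [Module K M''] [AddCommGroup F] [Module K F]

theorem finrank_map_add_finrank_inf_ker (f : M →ₗ[K] M') (A : Submodule K M)
    [FiniteDimensional K A] :
    Module.finrank K (A.map f) + Module.finrank K ↥(A ⊓ LinearMap.ker f) = Module.finrank K A := by
  rw [← LinearMap.finrank_range_add_finrank_ker (f.domRestrict A), LinearMap.range_domRestrict,
    LinearMap.ker_domRestrict, ← Submodule.map_comap_subtype, Submodule.finrank_map_subtype_eq]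

theorem finrank_map_le_of_ker_le {f : M →ₗ[K] M'} {g : M →ₗ[K] M''}
    (h : LinearMap.ker f ≤ LinearMap.ker g) (A : Submodule K M) [FiniteDimensional K A] :
    Module.finrank K (A.map g) ≤ Module.finrank K (A.map f) := by
  have hf := finrank_map_add_finrank_inf_ker f A
  have hg := finrank_map_add_finrank_inf_ker g A
  have : FiniteDimensional K ↥(A ⊓ LinearMap.ker g) := Submodule.finiteDimensional_inf_left _ _
  have hle := Submodule.finrank_mono (inf_le_inf_left A h)
  omega

theorem finrank_map_le_add {V V' : Submodule K M} [FiniteDimensional K V]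
    [FiniteDimensional K V'] {ev : M →ₗ[K] F} {g : M →ₗ[K] M'}
    (h : V' ⊓ LinearMap.ker ev ≤ V ⊔ LinearMap.ker g) :
    Module.finrank K (V'.map g) ≤ Module.finrank K (V'.map ev) + Module.finrank K (V.map g) := by
  have : FiniteDimensional K ↥(V' ⊓ LinearMap.ker ev) := Submodule.finiteDimensional_inf_left _ _
  have : FiniteDimensional K ↥(V' ⊓ LinearMap.ker g) := Submodule.finiteDimensional_inf_left _ _
  have hev := finrank_map_add_finrank_inf_ker ev V'
  have hV' := finrank_map_add_finrank_inf_ker g V'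
  have hker := finrank_map_add_finrank_inf_ker g (V' ⊓ LinearMap.ker ev)
  have hinf : Module.finrank K ↥(V' ⊓ LinearMap.ker ev ⊓ LinearMap.ker g) ≤
      Module.finrank K ↥(V' ⊓ LinearMap.ker g) :=
    Submodule.finrank_mono (inf_le_inf_right _ inf_le_left)
  have hmap : (V' ⊓ LinearMap.ker ev).map g ≤ V.map g := by
    rw [Submodule.map_le_iff_le_comap, Submodule.comap_map_eq]
    exact h
  have hmap := Submodule.finrank_mono hmap
  omega

theorem finrank_map_add_le {V V' : Submodule K M} [FiniteDimensional K V']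
    {ev : M →ₗ[K] F} {g : M →ₗ[K] M'} (hV : V ≤ V' ⊓ LinearMap.ker ev)
    (hg : V' ⊓ LinearMap.ker g ≤ LinearMap.ker ev) :
    Module.finrank K (V'.map ev) + Module.finrank K (V.map g) ≤ Module.finrank K (V'.map g) := by
  have : FiniteDimensional K ↥(V' ⊓ LinearMap.ker ev) := Submodule.finiteDimensional_inf_left _ _
  have hev := finrank_map_add_finrank_inf_ker ev V'
  have hV' := finrank_map_add_finrank_inf_ker g V'
  have hker := finrank_map_add_finrank_inf_ker g (V' ⊓ LinearMap.ker ev)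
  rw [inf_right_comm, inf_eq_left.2 hg] at hker
  have hmap := Submodule.finrank_mono (Submodule.map_mono (f := g) hV)
  omega

end FinrankMap

section Growth

variable {θ : ℕ}

instance finiteDimensional_Wfil (n : ℕ) : FiniteDimensional ℂ (Wfil θ n) := by
  refine FiniteDimensional.span_of_finite ℂ ?_
  refine ((List.finite_length_le (Fin θ) n).image (wordElem θ)).subset ?_
  rintro _ ⟨w, hw, rfl⟩
  exact ⟨w, hw, rfl⟩

theorem Wfil_mono {m n : ℕ} (h : m ≤ n) : Wfil θ m ≤ Wfil θ n := by
  refine Submodule.span_mono ?_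
  rintro _ ⟨w, hw, rfl⟩
  exact ⟨w, hw.trans h, rfl⟩

theorem Wfil_zero_le : Wfil θ 0 ≤ homogTot θ 0 := by
  refine Submodule.span_mono ?_
  rintro _ ⟨w, hw, rfl⟩
  exact ⟨w, Nat.le_zero.1 hw, rfl⟩

theorem Wfil_succ_le (n : ℕ) : Wfil θ (n + 1) ≤ Wfil θ n ⊔ homogTot θ (n + 1) := by
  refine Submodule.span_le.2 ?_
  rintro _ ⟨w, hw, rfl⟩
  rcases Nat.lt_or_ge n w.length with h | h
  · exact Submodule.mem_sup_right (Submodule.subset_span ⟨w, by omega, rfl⟩)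
  · exact Submodule.mem_sup_left (Submodule.subset_span ⟨w, h, rfl⟩)

theorem mul_mem_Wfil {m n : ℕ} {x y : TV θ} (hx : x ∈ Wfil θ m) (hy : y ∈ Wfil θ n) :
    x * y ∈ Wfil θ (m + n) := by
  have h := Submodule.mul_mem_mul hx hy
  rw [Wfil, Wfil, Submodule.span_mul_span] at h
  refine Submodule.span_mono ?_ h
  rintro _ ⟨_, ⟨v, hv, rfl⟩, _, ⟨w, hw, rfl⟩, rfl⟩
  exact ⟨v ++ w, by rw [List.length_append]; omega, (wordElem_append v w).symm⟩

theorem sum_degW (w : List (Fin θ)) : ∑ k, degW θ w k = w.length := by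
  induction w with
  | nil => simp [degW]
  | cons i w ih => simp [degW_cons, Finset.sum_add_distrib, ih, δ, add_comm]

theorem homogD_le_homogTot (d : Fin θ → ℕ) : homogD θ d ≤ homogTot θ (∑ k, d k) := by
  refine Submodule.span_mono ?_
  rintro _ ⟨w, rfl, rfl⟩
  exact ⟨w, (sum_degW w).symm, rfl⟩

theorem FinGK.of_finrank_le {θ' : ℕ} {I : Submodule ℂ (TV θ)} {J : Submodule ℂ (TV θ')}
    (hI : FinGK I) (m : ℕ) (h : ∀ n, Module.finrank ℂ ((Wfil θ' n).map J.mkQ) ≤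
      Module.finrank ℂ ((Wfil θ (m * n)).map I.mkQ)) : FinGK J := by
  obtain ⟨C, d, hCd⟩ := hI
  refine ⟨C * (m + 1) ^ d, d, fun n => (h n).trans ((hCd _).trans ?_)⟩
  rw [mul_assoc, ← mul_pow]
  gcongr
  nlinarith

variable (q : Fin θ → Fin θ → ℂˣ)

/-- The evaluation of all functionals `dualWord` attached to words of length `n`. -/
def dualEval (n : ℕ) : TV θ →ₗ[ℂ] ({w : List (Fin θ) // w.length = n} → ℂ) :=
  LinearMap.pi fun w => dualWord q w.1

variable {q}

theorem mem_ker_dualEval {n : ℕ} {x : TV θ} : x ∈ LinearMap.ker (dualEval q n) ↔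
    ∀ w : List (Fin θ), w.length = n → dualWord q w x = 0 := by
  rw [LinearMap.mem_ker, funext_iff, Subtype.forall]
  rfl

theorem homogTot_inf_ker_dualEval_le (n : ℕ) :
    homogTot θ n ⊓ LinearMap.ker (dualEval q n) ≤ pairingRadical q := fun _ hx =>
  mem_pairingRadical_of_mem_homogTot hx.1 (mem_ker_dualEval.1 hx.2)

theorem Wfil_le_ker_dualEval_succ (n : ℕ) : Wfil θ n ≤ LinearMap.ker (dualEval q (n + 1)) :=
  fun _ hx => mem_ker_dualEval.2 fun w hw =>
    dualWord_eq_zero_of_mem_Wfil hx (by rw [hw]; exact n.lt_succ_self)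

theorem Wfil_succ_inf_ker_dualEval_le (n : ℕ) :
    Wfil θ (n + 1) ⊓ LinearMap.ker (dualEval q (n + 1)) ≤ Wfil θ n ⊔ pairingRadical q := by
  rintro _ ⟨hx, hker⟩
  obtain ⟨v, hv, y, hy, rfl⟩ := Submodule.mem_sup.1 (Wfil_succ_le n hx)
  have hyker := (Submodule.add_mem_iff_right _ (Wfil_le_ker_dualEval_succ n hv)).1 hker
  exact Submodule.add_mem_sup hv (homogTot_inf_ker_dualEval_le _ ⟨hy, hyker⟩)

theorem finrank_map_mkQ_pairingRadical_le {M : Type*} [AddCommGroup M] [Module ℂ M]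
    {g : TV θ →ₗ[ℂ] M} (hg : ∀ n, Wfil θ n ⊓ LinearMap.ker g ≤ LinearMap.ker (dualEval q n))
    (n : ℕ) : Module.finrank ℂ ((Wfil θ n).map (pairingRadical q).mkQ) ≤
      Module.finrank ℂ ((Wfil θ n).map g) := by
  induction n with
  | zero =>
    have hrad : Wfil θ 0 ⊓ LinearMap.ker (dualEval q 0) ≤
        ⊥ ⊔ LinearMap.ker (pairingRadical q).mkQ := by
      rw [bot_sup_eq, Submodule.ker_mkQ]
      exact (inf_le_inf_right _ Wfil_zero_le).trans (homogTot_inf_ker_dualEval_le 0)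
    have hle := finrank_map_le_add hrad
    have hge := finrank_map_add_le (V := (⊥ : Submodule ℂ (TV θ))) bot_le (hg 0)
    rw [Submodule.map_bot, finrank_bot, add_zero] at hle hge
    exact hle.trans hge
  | succ n ih =>
    have hrad : Wfil θ (n + 1) ⊓ LinearMap.ker (dualEval q (n + 1)) ≤
        Wfil θ n ⊔ LinearMap.ker (pairingRadical q).mkQ := by
      rw [Submodule.ker_mkQ]
      exact Wfil_succ_inf_ker_dualEval_le n
    have hle := finrank_map_le_add hrad
    have hge := finrank_map_add_le
      (le_inf (Wfil_mono (Nat.le_add_right n 1)) (Wfil_le_ker_dualEval_succ n)) (hg (n + 1))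
    omega

end Growth

section PrimitiveFamilies

variable {θ θ' : ℕ} {q : Fin θ → Fin θ → ℂˣ} {S : BraidedStr θ q} {I : Submodule ℂ (TV θ)}

/-- Homogeneous elements of `T(V)` whose classes in `T(V)/I` are primitive and span a braided
subspace of diagonal type with braiding matrix `q'`. -/
structure PrimitiveFamily (hI : IsPreNicholsIdeal S I) (q' : Fin θ' → Fin θ' → ℂˣ) where
  elem : Fin θ' → TV θ
  degree : Fin θ' → Fin θ → ℕ
  mem_homogD (j : Fin θ') : elem j ∈ homogD θ (degree j)
  braiding (j k : Fin θ') : (q' j k : ℂ) = qf q (degree j) (degree k)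
  isPrimitiveMod (j : Fin θ') : hI.IsPrimitiveMod (elem j)
  counit_elem (j : Fin θ') : counit θ (elem j) = 0

namespace PrimitiveFamily

variable {hI : IsPreNicholsIdeal S I} {q' : Fin θ' → Fin θ' → ℂˣ} (F : PrimitiveFamily hI q')

/-- The algebra map from the tensor algebra of a family of primitive elements to `T(V)`. -/
def toAlgHom : TV θ' →ₐ[ℂ] TV θ := FreeAlgebra.lift ℂ F.elem

@[simp] theorem toAlgHom_gen (j : Fin θ') : F.toAlgHom (gen θ' j) = F.elem j := by
  simp [toAlgHom, gen]

theorem counit_toAlgHom (x : TV θ') : counit θ (F.toAlgHom x) = counit θ' x := by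
  have h : (counit θ).comp F.toAlgHom = counit θ' :=
    algHom_ext_gen fun j => by simp [F.counit_elem]
  exact DFunLike.congr_fun h x

theorem diagScale_toAlgHom (j : Fin θ') (x : TV θ') :
    diagScale (rootChar q (F.degree j)) (F.toAlgHom x) =
      F.toAlgHom (diagScale (fun k => (q' j k : ℂ)) x) := by
  have h : (diagScale (rootChar q (F.degree j))).comp F.toAlgHom =
      F.toAlgHom.comp (diagScale fun k => (q' j k : ℂ)) :=
    algHom_ext_gen fun k => by simp [diagScale_rootChar q _ (F.mem_homogD k), F.braiding]
  exact DFunLike.congr_fun h x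

theorem quotCoprod_elem_map (j : Fin θ') (t : TV θ' ⊗[ℂ] TV θ') :
    hI.quotCoprod (F.elem j) (TensorProduct.map (I.mkQ ∘ₗ F.toAlgHom.toLinearMap)
      (I.mkQ ∘ₗ F.toAlgHom.toLinearMap) t) =
    TensorProduct.map (I.mkQ ∘ₗ F.toAlgHom.toLinearMap) (I.mkQ ∘ₗ F.toAlgHom.toLinearMap)
      (coprodMul q' (gen θ' j) t) := by
  suffices h : hI.quotCoprod (F.elem j) ∘ₗ TensorProduct.map (I.mkQ ∘ₗ F.toAlgHom.toLinearMap)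
        (I.mkQ ∘ₗ F.toAlgHom.toLinearMap) =
      TensorProduct.map (I.mkQ ∘ₗ F.toAlgHom.toLinearMap) (I.mkQ ∘ₗ F.toAlgHom.toLinearMap) ∘ₗ
        coprodMul q' (gen θ' j) from DFunLike.congr_fun h t
  refine TensorProduct.ext' fun a b => ?_
  rw [F.isPrimitiveMod j, coprodMul_gen, hI.quotLeft_eq, hI.quotRight_eq (F.mem_homogD j)]
  simp only [LinearMap.comp_apply, LinearMap.add_apply, TensorProduct.map_tmul,
    AlgHom.toLinearMap_apply, LinearMap.id_apply, hI.quotMul_mk, hI.quotScale_mk,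
    diagScale_toAlgHom, map_add, leftMul_tmul, rightMul_gen_tmul, map_mul, toAlgHom_gen]

theorem map_coprod_toAlgHom (x : TV θ') :
    TensorProduct.map I.mkQ I.mkQ (coprod q (F.toAlgHom x)) =
      TensorProduct.map (I.mkQ ∘ₗ F.toAlgHom.toLinearMap) (I.mkQ ∘ₗ F.toAlgHom.toLinearMap)
        (coprod q' x) := by
  induction x using gen_induction with
  | one => simp
  | add x x' hx hx' => simp only [map_add, hx, hx']
  | smul c x hx => simp only [map_smul, hx]
  | gen_mul j x hx =>
    rw [map_mul, coprod_mul, ← hI.quotCoprod_map, hx, toAlgHom_gen, quotCoprod_elem_map,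
      coprod_mul]

theorem coprodSlice_toAlgHom_sub_mem {f : TV θ →ₗ[ℂ] ℂ} (hf : I ≤ LinearMap.ker f)
    (x : TV θ') : coprodSlice q f (F.toAlgHom x) -
      F.toAlgHom (coprodSlice q' (f ∘ₗ F.toAlgHom.toLinearMap) x) ∈ I := by
  rw [← Submodule.Quotient.mk_eq_zero, ← Submodule.mkQ_apply, map_sub, sub_eq_zero,
    coprodSlice_apply, ← leftSlice_liftQ_map hf, F.map_coprod_toAlgHom, leftSlice_map,
    ← LinearMap.comp_assoc, Submodule.liftQ_mkQ]
  rfl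

theorem convProd_toAlgHom {ι : Type*} {f : ι → TV θ →ₗ[ℂ] ℂ}
    (hf : ∀ i, I ≤ LinearMap.ker (f i)) (w : List ι) (x : TV θ') :
    convProd q f w (F.toAlgHom x) =
      convProd q' (fun i => f i ∘ₗ F.toAlgHom.toLinearMap) w x := by
  induction w generalizing x with
  | nil => exact F.counit_toAlgHom x
  | cons i w ih =>
    rw [convProd_cons, convProd_cons, ← ih, ← sub_eq_zero, ← map_sub]
    exact hI.convProd_eq_zero hf (F.coprodSlice_toAlgHom_sub_mem (hf i) x) w

theorem exists_map_toAlgHom_Wfil_le :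
    ∃ m, ∀ n, (Wfil θ' n).map F.toAlgHom.toLinearMap ≤ Wfil θ (m * n) := by
  let m := ∑ j, ∑ k, F.degree j k
  have helem (j) : F.elem j ∈ Wfil θ m :=
    homogTot_le_Wfil (Finset.single_le_sum (f := fun j => ∑ k, F.degree j k)
      (fun _ _ => Nat.zero_le _) (Finset.mem_univ j)) (homogD_le_homogTot _ (F.mem_homogD j))
  have hword (w) : F.toAlgHom (wordElem θ' w) ∈ Wfil θ (m * w.length) := by
    induction w with
    | nil => exact Submodule.subset_span ⟨[], zero_le, map_one _⟩
    | cons j w ih =>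
      rw [wordElem_cons, map_mul, toAlgHom_gen, List.length_cons, Nat.mul_succ, add_comm]
      exact mul_mem_Wfil (helem j) ih
  refine ⟨m, fun n => ?_⟩
  rw [Wfil, Submodule.map_span_le]
  rintro _ ⟨w, hw, rfl⟩
  exact Wfil_mono (Nat.mul_le_mul_left m hw) (hword w)

theorem Wfil_inf_ker_le_ker_dualEval {f : Fin θ' → TV θ →ₗ[ℂ] ℂ}
    (hf : ∀ i, I ≤ LinearMap.ker (f i)) (hf1 : ∀ i, f i 1 = 0)
    (hfF : ∀ i j, f i (F.elem j) = if j = i then 1 else 0) (n : ℕ) :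
    Wfil θ' n ⊓ LinearMap.ker (I.mkQ ∘ₗ F.toAlgHom.toLinearMap) ≤
      LinearMap.ker (dualEval q' n) := by
  rintro x ⟨hx, hxI⟩
  refine mem_ker_dualEval.2 fun w hw => ?_
  rw [← convProd_eq_dualWord_of_mem_Wfil (f := fun i => f i ∘ₗ F.toAlgHom.toLinearMap)
    (by simpa using hf1) (by simpa using hfF) (hw ▸ hx), ← F.convProd_toAlgHom hf]
  exact hI.convProd_eq_zero hf ((Submodule.Quotient.mk_eq_zero I).1 hxI) w

theorem finGK_Jq {f : Fin θ' → TV θ →ₗ[ℂ] ℂ} (hf : ∀ i, I ≤ LinearMap.ker (f i))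
    (hf1 : ∀ i, f i 1 = 0) (hfF : ∀ i j, f i (F.elem j) = if j = i then 1 else 0)
    (hGK : FinGK I) (S' : BraidedStr θ' q') : FinGK (Jq S') := by
  obtain ⟨m, hm⟩ := F.exists_map_toAlgHom_Wfil_le
  refine hGK.of_finrank_le m fun n => ?_
  have hker : LinearMap.ker (pairingRadical q').mkQ ≤ LinearMap.ker (Jq S').mkQ := by
    rw [Submodule.ker_mkQ, Submodule.ker_mkQ]
    exact pairingRadical_le_Jq S'
  calc Module.finrank ℂ ((Wfil θ' n).map (Jq S').mkQ)
    _ ≤ Module.finrank ℂ ((Wfil θ' n).map (pairingRadical q').mkQ) :=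
      finrank_map_le_of_ker_le hker _
    _ ≤ Module.finrank ℂ ((Wfil θ' n).map (I.mkQ ∘ₗ F.toAlgHom.toLinearMap)) :=
      finrank_map_mkQ_pairingRadical_le (F.Wfil_inf_ker_le_ker_dualEval hf hf1 hfF) n
    _ ≤ Module.finrank ℂ ((Wfil θ (m * n)).map I.mkQ) := by
      rw [Submodule.map_comp]
      exact Submodule.finrank_mono (Submodule.map_mono (hm n))

end PrimitiveFamily

end PrimitiveFamilies

section RootSystems

variable {θ : ℕ} {q : Fin θ → Fin θ → ℂˣ}

theorem cij_self (q : Fin θ → Fin θ → ℂˣ) (i : Fin θ) : cij q i i = 2 := if_pos rfl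

theorem cij_nonpos {i j : Fin θ} (hij : i ≠ j) : cij q i j ≤ 0 := by
  rw [cij, if_neg hij]
  exact neg_nonpos.2 (Int.natCast_nonneg _)

theorem cij_eq_neg_one {i j : Fin θ} (hij : i ≠ j) (h : qtil q i j ≠ 1)
    (h' : (q i i : ℂ) = -1 ∨ (q i i : ℂ) * qtil q i j = 1) : cij q i j = -1 := by
  have h1 : 1 ∈ cSet q i j := by
    simp only [cSet, Set.mem_ofPred_eq, qnum, Finset.sum_range_succ, Finset.sum_range_zero]
    rcases h' with h' | h'
    · rw [h']; ring
    · rw [pow_one, h', sub_self, mul_zero]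
  have h0 : 0 ∉ cSet q i j := by
    simpa [cSet, qnum, sub_eq_zero] using fun h'' => h (Eq.symm h'')
  have hmin : sInf (cSet q i j) = 1 := by
    refine le_antisymm (Nat.sInf_le h1) (Nat.one_le_iff_ne_zero.2 fun hs => h0 ?_)
    exact hs ▸ Nat.sInf_mem ⟨1, h1⟩
  rw [cij, if_neg hij, hmin]
  rfl

theorem reflectMat_self (q : Fin θ → Fin θ → ℂˣ) (i : Fin θ) : reflectMat q i i i = q i i := by
  rw [reflectMat, cij_self, mul_assoc, mul_assoc, ← zpow_add, ← zpow_add]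
  simp

theorem reflectMat_diag_of_cij_eq_neg_one {i j : Fin θ} (hj : cij q i j = -1) :
    (reflectMat q i j j : ℂ) = q j j * qtil q i j * q i i := by
  simp only [reflectMat, hj, qtil, neg_neg, zpow_one, neg_mul_neg, one_mul, Units.val_mul]
  ring

theorem qtil_comm (q : Fin θ → Fin θ → ℂˣ) (i j : Fin θ) : qtil q i j = qtil q j i := mul_comm _ _

theorem qtil_reflectMat_self {i j : Fin θ} (hj : cij q i j = -1) :
    qtil (reflectMat q i) i j = (qtil q i j)⁻¹ * ((q i i : ℂ) ^ 2)⁻¹ := by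
  simp only [qtil, reflectMat, cij_self, hj, Units.val_mul, Units.val_zpow_eq_zpow_val]
  norm_num [zpow_neg]
  field_simp

theorem qtil_reflectMat {i j k : Fin θ} (hj : cij q i j = -1) (hk : cij q i k = -1) :
    qtil (reflectMat q i) j k = qtil q j k * qtil q i j * qtil q i k * (q i i : ℂ) ^ 2 := by
  simp only [qtil, reflectMat, hj, hk, neg_neg, zpow_one, neg_mul_neg, one_mul, Units.val_mul]
  ring

theorem sRefl_apply_self (q : Fin θ → Fin θ → ℂˣ) (i : Fin θ) (β : Fin θ → ℤ) :
    sRefl q i β i = -β i + ∑ j ∈ Finset.univ.erase i, -cij q i j * β j := by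
  rw [sRefl, if_pos rfl, ← Finset.add_sum_erase _ _ (Finset.mem_univ i), cij_self]
  simp only [neg_mul, Finset.sum_neg_distrib]
  ring

theorem sRefl_apply_of_ne (q : Fin θ → Fin θ → ℂˣ) {i k : Fin θ} (hk : k ≠ i) (β : Fin θ → ℤ) :
    sRefl q i β k = β k := by
  rw [sRefl, if_neg hk, sub_zero]

theorem le_sRefl_apply_self {i j k : Fin θ} (hij : i ≠ j) (hik : i ≠ k) (hjk : j ≠ k)
    (hj : cij q i j = -1) (hk : cij q i k = -1) {β : Fin θ → ℤ} (hβ : 0 ≤ β) :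
    -β i + (β j + β k) ≤ sRefl q i β i := by
  rw [sRefl_apply_self]
  refine add_le_add_right ?_ _
  calc β j + β k = ∑ l ∈ {j, k}, -cij q i l * β l := by simp [Finset.sum_pair hjk, hj, hk]
    _ ≤ ∑ l ∈ Finset.univ.erase i, -cij q i l * β l := by
      refine Finset.sum_le_sum_of_subset_of_nonneg ?_ fun l hl _ => ?_
      · simp [Finset.insert_subset_iff, hij.symm, hik.symm]
      · exact mul_nonneg (neg_nonneg.2 (cij_nonpos (Finset.ne_of_mem_erase hl).symm)) (hβ l)

/-- The Dynkin diagram of `q` restricted to the vertices in `s` is a complete graph with all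
vertices labelled `ζ` and all edges labelled `ζ⁻¹`.  For three vertices this is the diagram of
affine Cartan type `A₂⁽¹⁾`. -/
structure IsCompleteOn (ζ : ℂ) (s : Set (Fin θ)) (q : Fin θ → Fin θ → ℂˣ) : Prop where
  diag : ∀ i ∈ s, (q i i : ℂ) = ζ
  qtil_eq : ∀ i ∈ s, ∀ j ∈ s, i ≠ j → qtil q i j = ζ⁻¹

/-- Nonnegative roots of `q`, at points of the Weyl groupoid with complete diagram on `s`, whose
coordinates at `a`, `b`, `c` are ordered and not all equal. -/
def orderedRoots (ζ : ℂ) (s : Set (Fin θ)) (q : Fin θ → Fin θ → ℂˣ) (a b c : Fin θ) :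
    Set (Fin θ → ℤ) :=
  {β | (∃ p, IsCompleteOn ζ s p ∧ ReachRoot q p β) ∧
    0 ≤ β ∧ β a ≤ β b ∧ β b ≤ β c ∧ β a < β c}

namespace IsCompleteOn

variable {ζ : ℂ} {s : Set (Fin θ)}

theorem ne_zero (h : IsCompleteOn ζ s q) {i : Fin θ} (hi : i ∈ s) : ζ ≠ 0 :=
  h.diag i hi ▸ (q i i).ne_zero

theorem cij_eq (h : IsCompleteOn ζ s q) (hζ : ζ ≠ 1) {i j : Fin θ} (hi : i ∈ s) (hj : j ∈ s)
    (hij : i ≠ j) : cij q i j = -1 := by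
  refine cij_eq_neg_one hij ?_ (Or.inr ?_)
  · rwa [h.qtil_eq i hi j hj hij, inv_ne_one]
  · rw [h.qtil_eq i hi j hj hij, h.diag i hi, mul_inv_cancel₀ (h.ne_zero hi)]

theorem reflect (h : IsCompleteOn ζ s q) (hζ : ζ ≠ 1) {i : Fin θ} (hi : i ∈ s) :
    IsCompleteOn ζ s (reflectMat q i) := by
  have hζ0 := h.ne_zero hi
  have hself (k) (hk : k ∈ s) (hik : i ≠ k) : qtil (reflectMat q i) i k = ζ⁻¹ := by
    rw [qtil_reflectMat_self (h.cij_eq hζ hi hk hik), h.diag i hi, h.qtil_eq i hi k hk hik]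
    field_simp
  refine ⟨fun j hj => ?_, fun j hj k hk hjk => ?_⟩
  · obtain rfl | hij := eq_or_ne i j
    · rw [reflectMat_self, h.diag i hi]
    · rw [reflectMat_diag_of_cij_eq_neg_one (h.cij_eq hζ hi hj hij), h.diag j hj, h.diag i hi,
        h.qtil_eq i hi j hj hij, mul_inv_cancel₀ hζ0, one_mul]
  · obtain rfl | hij := eq_or_ne i j
    · exact hself k hk hjk
    obtain rfl | hik := eq_or_ne i k
    · rw [qtil_comm, hself j hj hij]
    rw [qtil_reflectMat (h.cij_eq hζ hi hj hij) (h.cij_eq hζ hi hk hik), h.diag i hi,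
      h.qtil_eq j hj k hk hjk, h.qtil_eq i hi j hj hij, h.qtil_eq i hi k hk hik]
    field_simp

theorem le_sRefl_apply_self (h : IsCompleteOn ζ s q) (hζ : ζ ≠ 1) {i j k : Fin θ} (hi : i ∈ s)
    (hj : j ∈ s) (hk : k ∈ s) (hij : i ≠ j) (hik : i ≠ k) (hjk : j ≠ k) {β : Fin θ → ℤ}
    (hβ : 0 ≤ β) : -β i + (β j + β k) ≤ sRefl q i β i :=
  PreNicholsPaper.le_sRefl_apply_self hij hik hjk (h.cij_eq hζ hi hj hij)
    (h.cij_eq hζ hi hk hik) hβ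

end IsCompleteOn

theorem sRefl_nonneg {i : Fin θ} {β : Fin θ → ℤ} (hβ : 0 ≤ β) (hi : 0 ≤ sRefl q i β i) :
    0 ≤ sRefl q i β := fun k => by
  obtain rfl | hk := eq_or_ne k i
  · exact hi
  · rw [sRefl_apply_of_ne q hk]
    exact hβ k

/-- Reflecting successively at `a`, `b`, `c` replaces each coordinate by at least the sum of the
other two minus itself, so the order is kept and the last coordinate grows. -/
theorem exists_mem_orderedRoots_lt {ζ : ℂ} (hζ : ζ ≠ 1) {s : Set (Fin θ)} {a b c : Fin θ}
    (ha : a ∈ s) (hb : b ∈ s) (hc : c ∈ s) (hab : a ≠ b) (hac : a ≠ c) (hbc : b ≠ c)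
    {β : Fin θ → ℤ} (hβ : β ∈ orderedRoots ζ s q a b c) :
    ∃ γ ∈ orderedRoots ζ s q a b c, β c < γ c := by
  obtain ⟨⟨p₀, h₀, hr⟩, hβ0, hβab, hβbc, hβac⟩ := hβ
  have h₁ := h₀.reflect hζ ha
  have h₂ := h₁.reflect hζ hb
  set β₁ := sRefl p₀ a β
  set β₂ := sRefl (reflectMat p₀ a) b β₁
  set β₃ := sRefl (reflectMat (reflectMat p₀ a) b) c β₂
  have e₁b : β₁ b = β b := sRefl_apply_of_ne _ hab.symm _
  have e₁c : β₁ c = β c := sRefl_apply_of_ne _ hac.symm _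
  have e₂a : β₂ a = β₁ a := sRefl_apply_of_ne _ hab _
  have e₂c : β₂ c = β₁ c := sRefl_apply_of_ne _ hbc.symm _
  have e₃a : β₃ a = β₂ a := sRefl_apply_of_ne _ hac _
  have e₃b : β₃ b = β₂ b := sRefl_apply_of_ne _ hbc _
  have hβa : 0 ≤ β a := hβ0 a
  have l₁ : -β a + (β b + β c) ≤ β₁ a := h₀.le_sRefl_apply_self hζ ha hb hc hab hac hbc hβ0
  have hβ₁a : 0 ≤ β₁ a := by omega
  have hβ₁0 : 0 ≤ β₁ := sRefl_nonneg hβ0 hβ₁a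
  have l₂ : -β₁ b + (β₁ a + β₁ c) ≤ β₂ b :=
    h₁.le_sRefl_apply_self hζ hb ha hc hab.symm hbc hac hβ₁0
  have hβ₂b : 0 ≤ β₂ b := by omega
  have hβ₂0 : 0 ≤ β₂ := sRefl_nonneg hβ₁0 hβ₂b
  have l₃ : -β₂ c + (β₂ a + β₂ b) ≤ β₃ c :=
    h₂.le_sRefl_apply_self hζ hc ha hb hac.symm hbc.symm hab hβ₂0
  have hβ₃c : 0 ≤ β₃ c := by omega
  have hβ₃0 : 0 ≤ β₃ := sRefl_nonneg hβ₂0 hβ₃c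
  refine ⟨β₃, ⟨⟨_, h₂.reflect hζ hc, ((hr.reflect a).reflect b).reflect c⟩, hβ₃0, ?_⟩, ?_⟩
  all_goals omega

theorem not_finiteRootSystem_of_mem_orderedRoots {ζ : ℂ} (hζ : ζ ≠ 1) {s : Set (Fin θ)}
    {a b c : Fin θ} (ha : a ∈ s) (hb : b ∈ s) (hc : c ∈ s) (hab : a ≠ b) (hac : a ≠ c)
    (hbc : b ≠ c) {β : Fin θ → ℤ} (hβ : β ∈ orderedRoots ζ s q a b c) :
    ¬ FiniteRootSystem q := by
  intro hfin
  have hfin : (orderedRoots ζ s q a b c).Finite :=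
    hfin.2.subset fun _ ⟨⟨p, _, hr⟩, _⟩ => ⟨p, hr⟩
  obtain ⟨γ, hγ, hmax⟩ := Set.exists_max_image _ (fun γ => γ c) hfin ⟨β, hβ⟩
  obtain ⟨γ', hγ', hlt⟩ := exists_mem_orderedRoots_lt hζ ha hb hc hab hac hbc hγ
  exact (hmax γ' hγ').not_gt hlt

/-- The Dynkin diagram of `q` restricted to the vertex `c` and the vertices in `s` is a star with
centre `c`, all vertices labelled `-1` and all edges labelled `ξ`. -/
structure IsStar (ξ : ℂ) (c : Fin θ) (s : Set (Fin θ)) (q : Fin θ → Fin θ → ℂˣ) : Prop where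
  notMem : c ∉ s
  diag_centre : (q c c : ℂ) = -1
  diag_leaf : ∀ i ∈ s, (q i i : ℂ) = -1
  qtil_centre : ∀ i ∈ s, qtil q c i = ξ
  qtil_leaf : ∀ i ∈ s, ∀ j ∈ s, i ≠ j → qtil q i j = 1

namespace IsStar

variable {ξ : ℂ} {c : Fin θ} {s : Set (Fin θ)}

theorem cij_centre (h : IsStar ξ c s q) (hξ1 : ξ ≠ 1) {i : Fin θ} (hi : i ∈ s) :
    cij q c i = -1 :=
  cij_eq_neg_one (fun hci => h.notMem (hci ▸ hi)) (by rwa [h.qtil_centre i hi])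
    (Or.inl h.diag_centre)

theorem isCompleteOn_reflectMat (h : IsStar ξ c s q) (hξ1 : ξ ≠ 1) (hξ3 : ξ ^ 3 = 1) :
    IsCompleteOn ξ s (reflectMat q c) := by
  refine ⟨fun i hi => ?_, fun i hi j hj hij => ?_⟩
  · rw [reflectMat_diag_of_cij_eq_neg_one (h.cij_centre hξ1 hi), h.diag_leaf i hi, h.diag_centre,
      h.qtil_centre i hi]
    ring
  · rw [qtil_reflectMat (h.cij_centre hξ1 hi) (h.cij_centre hξ1 hj), h.qtil_leaf i hi j hj hij,
      h.qtil_centre i hi, h.qtil_centre j hj, h.diag_centre]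
    refine eq_inv_of_mul_eq_one_left ?_
    linear_combination hξ3

theorem not_finiteRootSystem (h : IsStar ξ c s q) (hξ1 : ξ ≠ 1) (hξ3 : ξ ^ 3 = 1)
    {i j k : Fin θ} (hi : i ∈ s) (hj : j ∈ s) (hk : k ∈ s) (hij : i ≠ j) (hik : i ≠ k)
    (hjk : j ≠ k) : ¬ FiniteRootSystem q := by
  have hne {l} (hl : l ∈ s) : l ≠ c := fun hlc => h.notMem (hlc ▸ hl)
  let α : Fin θ → ℤ := fun l => if l = k then 1 else 0
  have hα : 0 ≤ α := fun l => by dsimp only [α]; split_ifs <;> simp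
  refine not_finiteRootSystem_of_mem_orderedRoots (ζ := ξ) hξ1 hi hj hk hij hik hjk
    (β := sRefl q c α) ⟨⟨_, h.isCompleteOn_reflectMat hξ1 hξ3, (ReachRoot.simple k).reflect c⟩,
      sRefl_nonneg hα ?_, ?_⟩
  · rw [sRefl_apply_self]
    refine add_nonneg (by simp [α, (hne hk).symm]) (Finset.sum_nonneg fun l hl => ?_)
    exact mul_nonneg (neg_nonneg.2 (cij_nonpos (Finset.ne_of_mem_erase hl).symm)) (hα l)
  · simp [sRefl_apply_of_ne, hne hi, hne hj, hne hk, α, hik, hjk]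

end IsStar

theorem not_finiteRootSystem_of_self_eq_one {i j : Fin θ} (hij : j ≠ i) (hi : (q i i : ℂ) = 1)
    (h : qtil q i j ≠ 1) : ¬ FiniteRootSystem q := by
  intro hfin
  obtain ⟨n, hn⟩ := hfin.1 q i ⟨_, ReachRoot.simple i⟩ j hij
  simp only [cSet, Set.mem_ofPred_eq, qnum, hi, one_pow, one_mul, Finset.sum_const,
    Finset.card_range, nsmul_eq_mul, mul_one, mul_eq_zero, sub_eq_zero] at hn
  rcases hn with hn | hn
  · exact n.succ_ne_zero (by exact_mod_cast hn)
  · exact h hn.symm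

end RootSystems

/-- The bracket `uv - k vu` in an associative algebra. -/
def skewBr {R : Type*} [Ring R] [Algebra ℂ R] (k : ℂ) (u v : R) : R := u * v - k • (v * u)

section Brackets

variable {R : Type*} [Ring R] [Algebra ℂ R] (p : Fin 3 → Fin 3 → ℂ) (Z : Fin 3 → R)

/-- The braided commutator `x_{12}` of a triple of elements of an algebra. -/
def bracket12 : R := skewBr (p 0 1) (Z 0) (Z 1)

/-- The braided commutator `x_{23}` of a triple of elements of an algebra. -/
def bracket23 : R := skewBr (p 1 2) (Z 1) (Z 2)

/-- The braided commutator `x_{123}` of a triple of elements of an algebra. -/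
def bracket123 : R := skewBr (p 0 1 * p 0 2) (Z 0) (bracket23 p Z)

/-- The braided commutator `[x_{12}, x_{123}]_c` of a triple of elements of an algebra, for
`q_{11} = q_{22} = -1`. -/
def bracketInnerU : R :=
  skewBr (p 1 0 * p 0 1 * p 0 2 * p 1 2) (bracket12 p Z) (bracket123 p Z)

/-- The braided commutator `x_u` of a triple of elements of an algebra, for
`q_{11} = q_{22} = -1`. -/
def bracketU : R := skewBr (p 0 1 ^ 2 * p 2 1) (bracketInnerU p Z) (Z 1)

/-- The braided commutator `x_v` of a triple of elements of an algebra, for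
`q_{22} = q_{33} = -1`. -/
def bracketV : R :=
  skewBr (p 0 1 * p 2 1 ^ 2)
    (skewBr (p 0 1 * p 0 2 * p 1 2 * p 2 1) (bracket123 p Z) (bracket23 p Z)) (Z 1)

end Brackets

/-- The braiding matrix `p` is of type `g(2,3)` with all vertices `-1` and both edges `ξ`. -/
structure IsTypeG23 (ξ : ℂ) (p : Fin 3 → Fin 3 → ℂ) : Prop where
  isPrimitiveRoot : IsPrimitiveRoot ξ 3
  diag : ∀ i, p i i = -1
  edge01 : p 0 1 * p 1 0 = ξ
  edge12 : p 1 2 * p 2 1 = ξ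
  edge02 : p 0 2 * p 2 0 = 1

/-- Two triples `X`, `Y` in an associative algebra behaving as the images of `x_i ⊗ 1` and
`1 ⊗ x_i` in the braided tensor square of `T(V)/(x_1², x_2², x_3², x_{13})`. -/
structure BraidedTriples {R : Type*} [Ring R] [Algebra ℂ R] (p : Fin 3 → Fin 3 → ℂ)
    (X Y : Fin 3 → R) : Prop where
  left_sq : ∀ i, X i * X i = 0
  right_sq : ∀ i, Y i * Y i = 0
  left_swap : X 2 * X 0 = p 2 0 • (X 0 * X 2)
  right_swap : Y 2 * Y 0 = p 2 0 • (Y 0 * Y 2)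
  cross : ∀ i j, Y i * X j = p i j • (X j * Y i)

theorem IsTypeG23.sq_add_self_add_one {ξ : ℂ} {p : Fin 3 → Fin 3 → ℂ} (hp : IsTypeG23 ξ p) :
    ξ ^ 2 + ξ + 1 = 0 := by
  have h1 : ξ - 1 ≠ 0 := sub_ne_zero.2 (hp.isPrimitiveRoot.ne_one (by norm_num))
  refine (mul_eq_zero.1 ?_).resolve_left h1
  linear_combination hp.isPrimitiveRoot.pow_eq_one

theorem mul_skewBr_of_mul_eq {R : Type*} [Ring R] [Algebra ℂ R] {a b : ℂ} {u v y : R}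
    (hu : y * u = a • (u * y)) (hv : y * v = b • (v * y)) (k : ℂ) :
    y * skewBr k u v = (a * b) • (skewBr k u v * y) := by
  have h1 : ∀ r, y * (u * r) = a • (u * (y * r)) := fun r => by
    rw [← mul_assoc, hu, smul_mul_assoc, mul_assoc]
  have h2 : ∀ r, y * (v * r) = b • (v * (y * r)) := fun r => by
    rw [← mul_assoc, hv, smul_mul_assoc, mul_assoc]
  simp only [skewBr, mul_sub, sub_mul, mul_smul_comm, smul_mul_assoc, mul_assoc, h1, h2, hu, hv]
  module

theorem skewBr_mul_of_mul_eq {R : Type*} [Ring R] [Algebra ℂ R] {a b : ℂ} {u v x : R}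
    (hu : u * x = a • (x * u)) (hv : v * x = b • (x * v)) (k : ℂ) :
    skewBr k u v * x = (a * b) • (x * skewBr k u v) := by
  have h1 : ∀ r, u * (x * r) = a • (x * (u * r)) := fun r => by
    rw [← mul_assoc, hu, smul_mul_assoc, mul_assoc]
  have h2 : ∀ r, v * (x * r) = b • (x * (v * r)) := fun r => by
    rw [← mul_assoc, hv, smul_mul_assoc, mul_assoc]
  simp only [skewBr, mul_sub, sub_mul, mul_smul_comm, smul_mul_assoc, mul_assoc, h1, h2, hu, hv]
  module

namespace BraidedTriples

variable {R : Type*} [Ring R] [Algebra ℂ R] {p : Fin 3 → Fin 3 → ℂ} {X Y : Fin 3 → R} {ξ : ℂ}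

theorem left_sq_assoc (h : BraidedTriples p X Y) (i : Fin 3) (r : R) : X i * (X i * r) = 0 := by
  rw [← mul_assoc, h.left_sq, zero_mul]

theorem right_sq_assoc (h : BraidedTriples p X Y) (i : Fin 3) (r : R) : Y i * (Y i * r) = 0 := by
  rw [← mul_assoc, h.right_sq, zero_mul]

theorem left_swap_assoc (h : BraidedTriples p X Y) (r : R) :
    X 2 * (X 0 * r) = p 2 0 • (X 0 * (X 2 * r)) := by
  rw [← mul_assoc, h.left_swap, smul_mul_assoc, mul_assoc]

theorem right_swap_assoc (h : BraidedTriples p X Y) (r : R) :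
    Y 2 * (Y 0 * r) = p 2 0 • (Y 0 * (Y 2 * r)) := by
  rw [← mul_assoc, h.right_swap, smul_mul_assoc, mul_assoc]

theorem cross_assoc (h : BraidedTriples p X Y) (i j : Fin 3) (r : R) :
    Y i * (X j * r) = p i j • (X j * (Y i * r)) := by
  rw [← mul_assoc, h.cross, smul_mul_assoc, mul_assoc]

theorem skewBr_pair (h : BraidedTriples p X Y) (i j : Fin 3) :
    skewBr (p i j) ((X + Y) i) ((X + Y) j) =
      skewBr (p i j) (X i) (X j) + skewBr (p i j) (Y i) (Y j)
        + (1 - p i j * p j i) • (X i * Y j) := by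
  simp only [skewBr, Pi.add_apply, mul_add, add_mul, h.cross]
  module

theorem bracket12_add (h : BraidedTriples p X Y) (hp : IsTypeG23 ξ p) :
    bracket12 p (X + Y) = bracket12 p X + bracket12 p Y + (1 - ξ) • (X 0 * Y 1) := by
  rw [bracket12, h.skewBr_pair, hp.edge01]
  rfl

theorem bracket23_add (h : BraidedTriples p X Y) (hp : IsTypeG23 ξ p) :
    bracket23 p (X + Y) = bracket23 p X + bracket23 p Y + (1 - ξ) • (X 1 * Y 2) := by
  rw [bracket23, h.skewBr_pair, hp.edge12]
  rfl

theorem bracket123_add (h : BraidedTriples p X Y) (hp : IsTypeG23 ξ p) :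
    bracket123 p (X + Y) = bracket123 p X + bracket123 p Y
      + (1 - ξ) • (bracket12 p X * Y 2) + (1 - ξ) • (X 0 * bracket23 p Y) := by
  have e02 := hp.edge02
  have e12 := hp.edge12
  have e01 := hp.edge01
  rw [bracket123, h.bracket23_add hp]
  simp only [bracket123, bracket12, bracket23, skewBr, Pi.add_apply, mul_add, add_mul, mul_sub,
    sub_mul, smul_mul_assoc, mul_smul_comm, mul_assoc, h.left_swap, h.right_swap, h.cross,
    h.cross_assoc, smul_sub, smul_add, smul_smul]
  clear h hp
  match_scalars <;> grind

theorem bracketInnerU_add (h : BraidedTriples p X Y) (hp : IsTypeG23 ξ p) :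
    bracketInnerU p (X + Y) = bracketInnerU p X + bracketInnerU p Y
      + (3 : ℂ) • (bracket12 p X * (bracket12 p X * Y 2))
      - (3 * ξ ^ 2) • (bracket12 p X * (X 0 * bracket23 p Y))
      + (ξ * (1 - ξ)) • (bracket12 p X * bracket123 p Y)
      - (ξ ^ 2 * (1 - ξ)) • (X 0 * skewBr (-(p 1 0 * p 1 2)) (Y 1) (bracket123 p Y)) := by
  have e02 := hp.edge02
  have e12 := hp.edge12
  have e01 := hp.edge01
  have hξ := hp.sq_add_self_add_one
  have h00 := hp.diag 0
  have h11 := hp.diag 1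
  rw [bracketInnerU, h.bracket12_add hp, h.bracket123_add hp]
  simp only [bracketInnerU, bracket123, bracket12, bracket23, skewBr, mul_add, add_mul, mul_sub,
    sub_mul, smul_mul_assoc, mul_smul_comm, mul_assoc, h.right_sq, h.left_swap,
    h.right_swap, h.cross, h.left_sq_assoc, h.right_sq_assoc, h.left_swap_assoc,
    h.right_swap_assoc, h.cross_assoc, smul_zero, mul_zero, smul_sub, smul_add,
    smul_smul]
  clear h hp
  match_scalars <;> grind

theorem mul_bracket12 (h : BraidedTriples p X Y) (i : Fin 3) :
    Y i * bracket12 p X = (p i 0 * p i 1) • (bracket12 p X * Y i) :=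
  mul_skewBr_of_mul_eq (h.cross i 0) (h.cross i 1) _

theorem mul_bracket123 (h : BraidedTriples p X Y) (i : Fin 3) :
    Y i * bracket123 p X = (p i 0 * (p i 1 * p i 2)) • (bracket123 p X * Y i) :=
  mul_skewBr_of_mul_eq (h.cross i 0) (mul_skewBr_of_mul_eq (h.cross i 1) (h.cross i 2) _) _

theorem bracket12_mul (h : BraidedTriples p X Y) (j : Fin 3) :
    bracket12 p Y * X j = (p 0 j * p 1 j) • (X j * bracket12 p Y) :=
  skewBr_mul_of_mul_eq (h.cross 0 j) (h.cross 1 j) _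

theorem bracket23_mul (h : BraidedTriples p X Y) (j : Fin 3) :
    bracket23 p Y * X j = (p 1 j * p 2 j) • (X j * bracket23 p Y) :=
  skewBr_mul_of_mul_eq (h.cross 1 j) (h.cross 2 j) _

theorem bracket123_mul (h : BraidedTriples p X Y) (j : Fin 3) :
    bracket123 p Y * X j = (p 0 j * (p 1 j * p 2 j)) • (X j * bracket123 p Y) :=
  skewBr_mul_of_mul_eq (h.cross 0 j) (h.bracket23_mul j) _

theorem skewBr_bracketInnerU_right (h : BraidedTriples p X Y) (hp : IsTypeG23 ξ p) :
    skewBr (p 0 1 ^ 2 * p 2 1) (bracketInnerU p X) (Y 1) = 0 := by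
  have e01 := hp.edge01
  have e12 := hp.edge12
  have hξ := hp.isPrimitiveRoot.pow_eq_one
  have h11 := hp.diag 1
  rw [skewBr, bracketInnerU, mul_skewBr_of_mul_eq (h.mul_bracket12 1) (h.mul_bracket123 1)]
  clear h hp
  match_scalars
  grind

theorem skewBr_bracketInnerU_left (h : BraidedTriples p X Y) (hp : IsTypeG23 ξ p) :
    skewBr (p 0 1 ^ 2 * p 2 1) (bracketInnerU p Y) (X 1) = 0 := by
  have h11 := hp.diag 1
  rw [skewBr, bracketInnerU, skewBr_mul_of_mul_eq (h.bracket12_mul 1) (h.bracket123_mul 1)]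
  clear h hp
  match_scalars
  grind

theorem skewBr_bracket12_mul_bracket12_mul (h : BraidedTriples p X Y) (hp : IsTypeG23 ξ p) :
    skewBr (p 0 1 ^ 2 * p 2 1) (bracket12 p X * (bracket12 p X * Y 2)) ((X + Y) 1) =
      ξ ^ 2 • skewBr (p 0 1 ^ 2 * p 2 1) (bracket12 p X * (X 0 * bracket23 p Y)) ((X + Y) 1) := by
  have e01 := hp.edge01
  have e12 := hp.edge12
  have hξ := hp.isPrimitiveRoot.pow_eq_one
  have h11 := hp.diag 1
  simp only [bracket12, bracket23, skewBr, Pi.add_apply, mul_add, add_mul, mul_sub, sub_mul,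
    smul_mul_assoc, mul_smul_comm, mul_assoc, h.cross, h.left_sq_assoc, h.right_sq,
    h.right_sq_assoc, h.cross_assoc, smul_zero, mul_zero, zero_mul, smul_sub, smul_add, smul_smul]
  clear h hp
  match_scalars <;> grind

theorem skewBr_bracket12_mul_bracket123 (h : BraidedTriples p X Y) (hp : IsTypeG23 ξ p) :
    skewBr (p 0 1 ^ 2 * p 2 1) (bracket12 p X * bracket123 p Y) ((X + Y) 1) =
      ξ • skewBr (p 0 1 ^ 2 * p 2 1)
        (X 0 * skewBr (-(p 1 0 * p 1 2)) (Y 1) (bracket123 p Y)) ((X + Y) 1) := by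
  have e01 := hp.edge01
  have e12 := hp.edge12
  have hξ := hp.isPrimitiveRoot.pow_eq_one
  have h11 := hp.diag 1
  simp only [bracket12, bracket123, bracket23, skewBr, Pi.add_apply, mul_add, add_mul, mul_sub,
    sub_mul,
    smul_mul_assoc, mul_smul_comm, mul_assoc, h.cross, h.left_sq_assoc, h.right_sq,
    h.right_sq_assoc, h.cross_assoc, smul_zero, mul_zero, zero_mul, smul_sub, smul_add, smul_smul]
  clear h hp
  match_scalars <;> grind

theorem bracketU_add (h : BraidedTriples p X Y) (hp : IsTypeG23 ξ p) :
    bracketU p (X + Y) = bracketU p X + bracketU p Y := by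
  have hXY := h.skewBr_bracketInnerU_right hp
  have hYX := h.skewBr_bracketInnerU_left hp
  have h3 := h.skewBr_bracket12_mul_bracket12_mul hp
  have h1 := h.skewBr_bracket12_mul_bracket123 hp
  rw [bracketU, h.bracketInnerU_add hp]
  simp only [bracketU, skewBr, Pi.add_apply, mul_add, add_mul, mul_sub, sub_mul, smul_mul_assoc,
    mul_smul_comm] at hXY hYX h3 h1 ⊢
  linear_combination (norm := module) hXY + hYX + (3 : ℂ) • h3 + (ξ * (1 - ξ)) • h1

end BraidedTriples

section Reversal

open MulOpposite

/-- The diagram automorphism `1 ↔ 3` composed with transposition: the braiding matrix of the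
triple `opTriple`. -/
def opMatrix (p : Fin 3 → Fin 3 → ℂ) : Fin 3 → Fin 3 → ℂ := fun i j => p j.rev i.rev

/-- The triple in the opposite algebra obtained by exchanging the outer entries; it interchanges
the elements `x_u` and `x_v`. -/
def opTriple {R : Type*} (Z : Fin 3 → R) : Fin 3 → Rᵐᵒᵖ := fun i => op (Z i.rev)

variable {R : Type*} [Ring R] [Algebra ℂ R] {p : Fin 3 → Fin 3 → ℂ} {X Y Z : Fin 3 → R} {ξ : ℂ}

theorem IsTypeG23.op (hp : IsTypeG23 ξ p) : IsTypeG23 ξ (opMatrix p) where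
  isPrimitiveRoot := hp.isPrimitiveRoot
  diag i := hp.diag i.rev
  edge01 := hp.edge12
  edge12 := hp.edge01
  edge02 := hp.edge02

theorem BraidedTriples.op (h : BraidedTriples p X Y) :
    BraidedTriples (opMatrix p) (opTriple Y) (opTriple X) where
  left_sq i := congrArg MulOpposite.op (h.right_sq i.rev)
  right_sq i := congrArg MulOpposite.op (h.left_sq i.rev)
  left_swap := congrArg MulOpposite.op h.right_swap
  right_swap := congrArg MulOpposite.op h.left_swap
  cross i j := congrArg MulOpposite.op (h.cross j.rev i.rev)

theorem skewBr_eq_neg_smul_skewBr {k l : ℂ} (h : k * l = 1) (u v : R) :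
    skewBr k u v = -k • skewBr l v u := by
  rw [skewBr, skewBr, smul_sub, smul_smul, neg_mul, h]
  module

theorem skewBr_op (k : ℂ) (u v : R) : skewBr k (op u) (op v) = op (skewBr k v u) := rfl

theorem bracket123_eq_skewBr_bracket12 (hp : p 0 2 * p 2 0 = 1)
    (hZ : Z 2 * Z 0 = p 2 0 • (Z 0 * Z 2)) :
    bracket123 p Z = skewBr (p 1 2 * p 0 2) (bracket12 p Z) (Z 2) := by
  have hZ' (r : R) : Z 2 * (Z 0 * r) = p 2 0 • (Z 0 * (Z 2 * r)) := by
    rw [← mul_assoc, hZ, smul_mul_assoc, mul_assoc]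
  simp only [bracket123, bracket23, bracket12, skewBr, mul_sub, sub_mul, smul_mul_assoc,
    mul_smul_comm, mul_assoc, hZ, hZ', smul_sub, smul_smul]
  match_scalars <;> grind

theorem op_bracketV (hp : IsTypeG23 ξ p) (hZ : Z 2 * Z 0 = p 2 0 • (Z 0 * Z 2)) :
    op (bracketV p Z) = -(p 0 1 * p 2 1 ^ 2) • bracketU (opMatrix p) (opTriple Z) := by
  have hinner : bracketInnerU (opMatrix p) (opTriple Z) =
      op (skewBr (p 0 1 * p 0 2 * p 1 2 * p 2 1) (bracket123 p Z) (bracket23 p Z)) := by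
    rw [bracket123_eq_skewBr_bracket12 hp.edge02 hZ, ← skewBr_op, ← skewBr_op]
    simp only [bracketInnerU, opMatrix]
    congr 1
    simp [mul_comm, mul_left_comm]
  have hk : (p 0 1 * p 2 1 ^ 2) * (p 1 2 ^ 2 * p 1 0) = 1 := by
    grind [hp.isPrimitiveRoot.pow_eq_one, hp.edge01, hp.edge12]
  rw [bracketU, hinner, bracketV, skewBr_eq_neg_smul_skewBr hk, op_smul, ← skewBr_op]
  rfl

theorem BraidedTriples.add_swap (h : BraidedTriples p X Y) (hp : p 0 2 * p 2 0 = 1) :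
    (X + Y) 2 * (X + Y) 0 = p 2 0 • ((X + Y) 0 * (X + Y) 2) := by
  simp only [Pi.add_apply, mul_add, add_mul, h.left_swap, h.right_swap, h.cross]
  match_scalars <;> grind

theorem BraidedTriples.bracketV_add (h : BraidedTriples p X Y) (hp : IsTypeG23 ξ p) :
    bracketV p (X + Y) = bracketV p X + bracketV p Y := by
  refine op_injective ?_
  have hop : opTriple (X + Y) = opTriple Y + opTriple X := add_comm _ _
  rw [op_add, op_bracketV hp (h.add_swap hp.edge02), op_bracketV hp h.left_swap,
    op_bracketV hp h.right_swap, hop, h.op.bracketU_add hp.op, smul_add, add_comm]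

end Reversal

section Extension

variable {θ : ℕ} {q : Fin θ → Fin θ → ℂˣ} {S : BraidedStr θ q} {I : Submodule ℂ (TV θ)}

/-- The degrees of a basis of `V ⊕ ky` for `y` of degree `β`: the simple roots, followed by `β`. -/
def extDegree (β : Fin θ → ℕ) : Fin (θ + 1) → Fin θ → ℕ := Fin.snoc (δ θ) β

/-- The braiding matrix of the extension `V ⊕ ky` of `V` by a vector `y` of degree `β`. -/
def extMatrix (q : Fin θ → Fin θ → ℂˣ) (β : Fin θ → ℕ) : Fin (θ + 1) → Fin (θ + 1) → ℂˣ :=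
  fun j k => ∏ a, ∏ b, q a b ^ (extDegree β j a * extDegree β k b)

theorem extMatrix_eq_qf (q : Fin θ → Fin θ → ℂˣ) (β : Fin θ → ℕ) (j k : Fin (θ + 1)) :
    (extMatrix q β j k : ℂ) = qf q (extDegree β j) (extDegree β k) := by
  simp [extMatrix, qf]

theorem qtil_extMatrix (q : Fin θ → Fin θ → ℂˣ) (β : Fin θ → ℕ) (j k : Fin (θ + 1)) :
    qtil (extMatrix q β) j k =
      qf q (extDegree β j) (extDegree β k) * qf q (extDegree β k) (extDegree β j) := by
  rw [qtil, extMatrix_eq_qf, extMatrix_eq_qf]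

theorem genCoeff_eq_zero_of_mem_homogTot {n : ℕ} (hn : n ≠ 1) {x : TV θ} (hx : x ∈ homogTot θ n)
    (i : Fin θ) : genCoeff i x = 0 := by
  rw [← dualWord_singleton fun _ _ => 1]
  exact dualWord_eq_zero_of_mem_homogTot hx hn.symm

theorem counit_eq_zero_of_mem_homogTot {n : ℕ} (hn : n ≠ 0) {x : TV θ} (hx : x ∈ homogTot θ n) :
    counit θ x = 0 :=
  dualWord_eq_zero_of_mem_homogTot (q := fun _ _ => 1) hx (w := []) hn.symm

namespace IsPreNicholsIdeal

theorem notMem_sup_Wfil_one (hI : IsPreNicholsIdeal S I) {n : ℕ} (hn : 2 ≤ n) {y : TV θ}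
    (hy : y ∈ homogTot θ n) (hyI : y ∉ I) : y ∉ I ⊔ Wfil θ 1 := by
  intro h
  obtain ⟨a, ha, v, hv, rfl⟩ := Submodule.mem_sup.1 h
  have hv0 : v = 0 := by
    refine eq_zero_of_mem_Wfil_one hv ?_ fun i => ?_
    · have := counit_eq_zero_of_mem_homogTot (by omega) hy
      rwa [map_add, hI.counit_eq_zero ha, zero_add] at this
    · have := genCoeff_eq_zero_of_mem_homogTot (by omega) hy i
      rwa [map_add, hI.genCoeff_eq_zero ha, zero_add] at this
  exact hyI (by rwa [hv0, add_zero])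

theorem exists_functional_eq_one (hI : IsPreNicholsIdeal S I) {n : ℕ} (hn : 2 ≤ n) {y : TV θ}
    (hy : y ∈ homogTot θ n) (hyI : y ∉ I) :
    ∃ g : TV θ →ₗ[ℂ] ℂ, I ≤ LinearMap.ker g ∧ g 1 = 0 ∧ (∀ j, g (gen θ j) = 0) ∧ g y = 1 := by
  obtain ⟨g, hgy, hg⟩ := Submodule.exists_le_ker_of_notMem (hI.notMem_sup_Wfil_one hn hy hyI)
  have hword {w : List (Fin θ)} (hw : w.length ≤ 1) : g (wordElem θ w) = 0 :=
    hg (Submodule.mem_sup_right (Submodule.subset_span ⟨w, hw, rfl⟩))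
  refine ⟨(g y)⁻¹ • g, fun x hx => ?_, ?_, fun j => ?_, by simp [hgy]⟩
  · simp [show g x = 0 from hg (Submodule.mem_sup_left hx)]
  · simpa using Or.inr (hword (w := []) zero_le_one)
  · simpa [wordElem_singleton] using Or.inr (hword (w := [j]) le_rfl)

/-- The generators together with a primitive element `y` of degree `β`. -/
def extFamily (hI : IsPreNicholsIdeal S I) {β : Fin θ → ℕ} {y : TV θ} (hy : y ∈ homogD θ β)
    (hβ : ∑ k, β k ≠ 0) (hp : hI.IsPrimitiveMod y) : PrimitiveFamily hI (extMatrix q β) where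
  elem := Fin.snoc (gen θ) y
  degree := extDegree β
  mem_homogD j := by
    cases j using Fin.lastCases with
    | last => simpa [extDegree] using hy
    | cast j => simpa [extDegree] using gen_mem_homogD j
  braiding := extMatrix_eq_qf q β
  isPrimitiveMod j := by
    cases j using Fin.lastCases with
    | last => simpa using hp
    | cast j => simpa using hI.isPrimitiveMod_gen j
  counit_elem j := by
    cases j using Fin.lastCases with
    | last => simpa using counit_eq_zero_of_mem_homogTot hβ (homogD_le_homogTot β hy)
    | cast j => simp

theorem finiteRootSystem_extMatrix (hI : IsPreNicholsIdeal S I) (hGK : FinGK I) (hAAH : AAH)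
    {β : Fin θ → ℕ} {y : TV θ} (hy : y ∈ homogD θ β) (hβ : 2 ≤ ∑ k, β k)
    (hp : hI.IsPrimitiveMod y) (hyI : y ∉ I) : FiniteRootSystem (extMatrix q β) := by
  have hyT := homogD_le_homogTot β hy
  obtain ⟨g, hgI, hg1, hgen, hgy⟩ := hI.exists_functional_eq_one hβ hyT hyI
  refine hAAH _ _ (braidedStr _) ((hI.extFamily hy (by omega) hp).finGK_Jq
    (f := Fin.snoc genCoeff g) (fun j => ?_) (fun j => ?_) (fun i j => ?_) hGK _)
  · cases j using Fin.lastCases with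
    | last => simpa using hgI
    | cast j =>
      rw [Fin.snoc_castSucc]
      exact fun x hx => hI.genCoeff_eq_zero hx j
  · cases j using Fin.lastCases with
    | last => simpa using hg1
    | cast j => simp
  · have hlast (i : Fin θ) : genCoeff i y = 0 :=
      genCoeff_eq_zero_of_mem_homogTot (by omega) hyT i
    cases i using Fin.lastCases <;> cases j using Fin.lastCases <;>
      simp [extFamily, hgy, hgen, hlast, Fin.castSucc_ne_last, (Fin.castSucc_ne_last _).symm]

theorem mem_of_qf_self_eq_one (hI : IsPreNicholsIdeal S I) (hGK : FinGK I) (hAAH : AAH)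
    {β : Fin θ → ℕ} {y : TV θ} (hy : y ∈ homogD θ β) (hβ : 2 ≤ ∑ k, β k)
    (hp : hI.IsPrimitiveMod y) (h1 : qf q β β = 1) (j : Fin θ)
    (hj : qf q β (δ θ j) * qf q (δ θ j) β ≠ 1) : y ∈ I := by
  by_contra hyI
  have hcast : extDegree β j.castSucc = δ θ j := by simp [extDegree]
  have hlast : extDegree β (Fin.last θ) = β := by simp [extDegree]
  refine not_finiteRootSystem_of_self_eq_one (Fin.castSucc_ne_last j) ?_ ?_
    (hI.finiteRootSystem_extMatrix hGK hAAH hy hβ hp hyI)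
  · rw [extMatrix_eq_qf, hlast, h1]
  · rwa [qtil_extMatrix, hlast, hcast]

end IsPreNicholsIdeal

end Extension

theorem qf_δ_δ {θ : ℕ} (q : Fin θ → Fin θ → ℂˣ) (i j : Fin θ) : qf q (δ θ i) (δ θ j) = q i j := by
  rw [qf_eq_prod_rootChar, rootChar_δ]
  simp [δ]

namespace IsTypeG23

variable {q : Fin 3 → Fin 3 → ℂˣ} {S : BraidedStr 3 q} {I : Submodule ℂ (TV 3)} {ξ : ℂ}

theorem qf_mul_swap (h : IsTypeG23 ξ fun i j => (q i j : ℂ)) (a b : Fin 3 → ℕ) :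
    qf q a b * qf q b a = ξ ^ (a 1 * (b 0 + b 2) + b 1 * (a 0 + a 2)) := by
  have hsq (n : ℕ) : (-1 : ℂ) ^ n * (-1) ^ n = 1 := by rw [← mul_pow]; simp
  have hqf : qf q a b * qf q b a =
      ((-1) ^ (a 0 * b 0) * (-1) ^ (a 0 * b 0)) * ((-1) ^ (a 1 * b 1) * (-1) ^ (a 1 * b 1)) *
        ((-1) ^ (a 2 * b 2) * (-1) ^ (a 2 * b 2)) *
        ((q 0 1 : ℂ) * q 1 0) ^ (a 0 * b 1 + a 1 * b 0) *
        ((q 0 2 : ℂ) * q 2 0) ^ (a 0 * b 2 + a 2 * b 0) *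
        ((q 1 2 : ℂ) * q 2 1) ^ (a 1 * b 2 + a 2 * b 1) := by
    simp only [qf, Fin.prod_univ_three, h.diag, mul_pow, pow_add, mul_comm (b _) (a _)]
    ring
  rw [hqf, h.edge01, h.edge02, h.edge12, hsq, hsq, hsq]
  ring

theorem qf_self (h : IsTypeG23 ξ fun i j => (q i j : ℂ)) (a : Fin 3 → ℕ) :
    qf q a a = (-1) ^ (a 0 + a 1 + a 2) * ξ ^ (a 1 * (a 0 + a 2)) := by
  have hsq (n : ℕ) : (-1 : ℂ) ^ (n * n) = (-1) ^ n := by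
    rcases n.even_or_odd with hn | hn
    · rw [hn.neg_one_pow, (hn.mul_left n).neg_one_pow]
    · rw [hn.neg_one_pow, (hn.mul hn).neg_one_pow]
  have hqf : qf q a a = (-1) ^ (a 0 * a 0) * (-1) ^ (a 1 * a 1) * (-1) ^ (a 2 * a 2) *
      ((q 0 1 : ℂ) * q 1 0) ^ (a 0 * a 1) * ((q 0 2 : ℂ) * q 2 0) ^ (a 0 * a 2) *
      ((q 1 2 : ℂ) * q 2 1) ^ (a 1 * a 2) := by
    simp only [qf, Fin.prod_univ_three, h.diag, mul_pow]
    rw [mul_comm (a 1) (a 0), mul_comm (a 2) (a 0), mul_comm (a 2) (a 1)]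
    ring
  rw [hqf, h.edge01, h.edge02, h.edge12, hsq, hsq, hsq]
  ring

theorem isStar_extMatrix (h : IsTypeG23 ξ fun i j => (q i j : ℂ)) {β : Fin 3 → ℕ} (h1 : β 1 = 3)
    (h02 : β 0 + β 2 = 4) : IsStar ξ 1 {0, 2, 3} (extMatrix q β) := by
  have hξ := h.isPrimitiveRoot.pow_eq_one
  have hleaf : ∀ i ∈ ({0, 2, 3} : Set (Fin 4)), 3 ∣ extDegree β i 1 ∧
      Odd (extDegree β i 0 + extDegree β i 1 + extDegree β i 2) ∧
      (extDegree β i 0 + extDegree β i 2) % 3 = 1 := by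
    rintro i (rfl | rfl | rfl)
    · rw [show extDegree β 0 = δ 3 0 from rfl]
      decide
    · rw [show extDegree β 2 = δ 3 2 from rfl]
      decide
    · change 3 ∣ β 1 ∧ Odd (β 0 + β 1 + β 2) ∧ (β 0 + β 2) % 3 = 1
      exact ⟨dvd_of_eq h1.symm, ⟨3, by omega⟩, by omega⟩
  have hpow {n : ℕ} (hn : 3 ∣ n) : ξ ^ n = 1 := h.isPrimitiveRoot.pow_eq_one_iff_dvd n |>.2 hn
  constructor
  · decide
  · rw [extMatrix_eq_qf, h.qf_self, show extDegree β 1 = δ 3 1 from rfl]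
    simp [δ]
  · intro i hi
    obtain ⟨hdvd, hodd, -⟩ := hleaf i hi
    rw [extMatrix_eq_qf, h.qf_self, hodd.neg_one_pow, hpow (hdvd.mul_right _), mul_one]
  · intro i hi
    rw [qtil_extMatrix, h.qf_mul_swap, show extDegree β 1 = δ 3 1 from rfl,
      pow_eq_pow_mod _ hξ]
    simp [δ, hleaf i hi]
  · intro i hi j hj _
    rw [qtil_extMatrix, h.qf_mul_swap]
    exact hpow (dvd_add ((hleaf i hi).1.mul_right _) ((hleaf j hj).1.mul_right _))

theorem mem_of_isPrimitiveMod (h : IsTypeG23 ξ fun i j => (q i j : ℂ))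
    (hI : IsPreNicholsIdeal S I) (hGK : FinGK I) (hAAH : AAH) {β : Fin 3 → ℕ} {y : TV 3}
    (hy : y ∈ homogD 3 β) (hp : hI.IsPrimitiveMod y) (h1 : β 1 = 3) (h02 : β 0 + β 2 = 4) :
    y ∈ I := by
  by_contra hyI
  refine (h.isStar_extMatrix h1 h02).not_finiteRootSystem
    (h.isPrimitiveRoot.ne_one (by norm_num)) h.isPrimitiveRoot.pow_eq_one
    (i := 0) (j := 2) (k := 3) (by simp) (by simp) (by simp) (by decide) (by decide) (by decide)
    (hI.finiteRootSystem_extMatrix hGK hAAH hy ?_ hp hyI)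
  rw [Fin.sum_univ_three]
  omega

theorem sq_ne_one (h : IsTypeG23 ξ fun i j => (q i j : ℂ)) : ξ ^ 2 ≠ 1 :=
  h.isPrimitiveRoot.pow_ne_one_of_pos_of_lt (by norm_num) (by norm_num)

theorem gen_mul_self_mem (h : IsTypeG23 ξ fun i j => (q i j : ℂ)) (hI : IsPreNicholsIdeal S I)
    (hGK : FinGK I) (hAAH : AAH) (i : Fin 3) : gen 3 i * gen 3 i ∈ I := by
  have hqf : qf q (δ 3 i) (δ 3 i) = -1 := by rw [h.qf_self]; fin_cases i <;> simp [δ]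
  have hp : hI.IsPrimitiveMod (brk q (δ 3 i) (δ 3 i) (gen 3 i) (gen 3 i)) :=
    hI.isPrimitiveMod_brk (gen_mem_homogD i) (gen_mem_homogD i) (hI.isPrimitiveMod_gen i)
      (hI.isPrimitiveMod_gen i) (by rw [hqf]; norm_num)
  have hmem : brk q (δ 3 i) (δ 3 i) (gen 3 i) (gen 3 i) ∈ I := by
    refine hI.mem_of_qf_self_eq_one hGK hAAH
      (brk_mem_homogD q (gen_mem_homogD i) (gen_mem_homogD i)) ?_ hp ?_
      (if i = 1 then 0 else 1) ?_
    · fin_cases i <;> decide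
    · rw [h.qf_self]; fin_cases i <;> simp [δ]
    · rw [h.qf_mul_swap]; fin_cases i <;> simpa [δ] using h.sq_ne_one
  have htwo : brk q (δ 3 i) (δ 3 i) (gen 3 i) (gen 3 i) = (2 : ℂ) • (gen 3 i * gen 3 i) := by
    rw [brk, hqf]; module
  rwa [htwo, Submodule.smul_mem_iff _ two_ne_zero] at hmem

theorem brk_gen_zero_gen_two_mem (h : IsTypeG23 ξ fun i j => (q i j : ℂ))
    (hI : IsPreNicholsIdeal S I) (hGK : FinGK I) (hAAH : AAH) :
    brk q (δ 3 0) (δ 3 2) (gen 3 0) (gen 3 2) ∈ I := by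
  refine hI.mem_of_qf_self_eq_one hGK hAAH
    (brk_mem_homogD q (gen_mem_homogD 0) (gen_mem_homogD 2)) (by decide)
    (hI.isPrimitiveMod_brk (gen_mem_homogD 0) (gen_mem_homogD 2) (hI.isPrimitiveMod_gen 0)
      (hI.isPrimitiveMod_gen 2) ?_) ?_ 1 ?_
  · rw [h.qf_mul_swap]; simp [δ]
  · rw [h.qf_self]; simp [δ]
  · rw [h.qf_mul_swap]; simpa [δ] using h.sq_ne_one

theorem braidedTriples (h : IsTypeG23 ξ fun i j => (q i j : ℂ)) (hI : IsPreNicholsIdeal S I)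
    (hGK : FinGK I) (hAAH : AAH) : BraidedTriples (fun i j => (q i j : ℂ))
      (fun i => hI.quotLeft (gen 3 i)) (fun i => hI.quotRight (gen 3 i)) := by
  have hleft {u : TV 3} (hu : u ∈ I) : hI.quotLeft u = 0 := by
    rw [hI.quotLeft_eq, hI.quotMul_eq_zero hu, TensorProduct.map_zero_left]
  have hright {β : Fin 3 → ℕ} {u : TV 3} (hu : u ∈ homogD 3 β) (huI : u ∈ I) :
      hI.quotRight u = 0 := by
    rw [hI.quotRight_eq hu, hI.quotMul_eq_zero huI, TensorProduct.map_zero_right]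
  have hswap {φ : TV 3 →ₐ[ℂ] Module.End ℂ ((TV 3 ⧸ I) ⊗[ℂ] (TV 3 ⧸ I))}
      (hφ : φ (brk q (δ 3 0) (δ 3 2) (gen 3 0) (gen 3 2)) = 0) :
      φ (gen 3 2) * φ (gen 3 0) = (q 2 0 : ℂ) • (φ (gen 3 0) * φ (gen 3 2)) := by
    rw [brk, map_sub, map_smul, map_mul, map_mul, qf_δ_δ, sub_eq_zero] at hφ
    rw [hφ, smul_smul, mul_comm, h.edge02, one_smul]
  have hsq := h.gen_mul_self_mem hI hGK hAAH
  have h02 := h.brk_gen_zero_gen_two_mem hI hGK hAAH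
  constructor
  · intro i
    rw [← map_mul, hleft (hsq i)]
  · intro i
    rw [← map_mul, hright (mul_mem_homogD (gen_mem_homogD i) (gen_mem_homogD i)) (hsq i)]
  · exact hswap (hleft h02)
  · exact hswap (hright (brk_mem_homogD q (gen_mem_homogD 0) (gen_mem_homogD 2)) h02)
  · intro i j
    rw [hI.quotRight_mul_quotLeft (gen_mem_homogD i) (gen_mem_homogD j), qf_δ_δ]

end IsTypeG23

section RootVectors

section Degree

variable {θ : ℕ} (q : Fin θ → Fin θ → ℂˣ)

theorem xw_mem_homogD : (w : List (Fin θ)) → xw q w ∈ homogD θ (degW θ w)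
  | [] => wordElem_mem_homogD []
  | [i] => by simpa [xw, wordElem_singleton] using wordElem_mem_homogD [i]
  | i :: j :: w => by
    rw [degW_cons]
    exact brk_mem_homogD q (gen_mem_homogD i) (xw_mem_homogD (j :: w))

theorem brk_mem_homogD_of_add_eq {a b c : Fin θ → ℕ} {u v : TV θ} (hc : a + b = c)
    (hu : u ∈ homogD θ a) (hv : v ∈ homogD θ b) : brk q a b u v ∈ homogD θ c :=
  hc ▸ brk_mem_homogD q hu hv

theorem gen_mem_homogD_of_δ_eq {i : Fin θ} {a : Fin θ → ℕ} (h : δ θ i = a) : gen θ i ∈ homogD θ a :=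
  h ▸ gen_mem_homogD i

theorem xw_mem_homogD_of_degW_eq {w : List (Fin θ)} {a : Fin θ → ℕ} (h : degW θ w = a) :
    xw q w ∈ homogD θ a :=
  h ▸ xw_mem_homogD q w

theorem map_brk {R : Type*} [Ring R] [Algebra ℂ R] (φ : TV θ →ₐ[ℂ] R) (a b : Fin θ → ℕ)
    (u v : TV θ) : φ (brk q a b u v) = skewBr (qf q a b) (φ u) (φ v) := by
  simp [brk, skewBr]

theorem map_xw_pair {R : Type*} [Ring R] [Algebra ℂ R] (φ : TV θ →ₐ[ℂ] R) (i j : Fin θ) :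
    φ (xw q [i, j]) = skewBr (q i j : ℂ) (φ (gen θ i)) (φ (gen θ j)) := by
  rw [← qf_δ_δ q i j, ← map_brk, ← degW_singleton j]
  rfl

end Degree

variable {q : Fin 3 → Fin 3 → ℂˣ} {S : BraidedStr 3 q} {I : Submodule ℂ (TV 3)} {ξ : ℂ}

theorem xu231_mem_homogD (q : Fin 3 → Fin 3 → ℂˣ) : xu231 q ∈ homogD 3 ![2, 3, 1] :=
  brk_mem_homogD_of_add_eq q (by decide)
    (brk_mem_homogD_of_add_eq q (by decide) (xw_mem_homogD_of_degW_eq q (by decide))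
      (xw_mem_homogD_of_degW_eq q (by decide)))
    (gen_mem_homogD_of_δ_eq (by decide))

theorem xv132_mem_homogD (q : Fin 3 → Fin 3 → ℂˣ) : xv132 q ∈ homogD 3 ![1, 3, 2] :=
  brk_mem_homogD_of_add_eq q (by decide)
    (brk_mem_homogD_of_add_eq q (by decide) (xw_mem_homogD_of_degW_eq q (by decide))
      (xw_mem_homogD_of_degW_eq q (by decide)))
    (gen_mem_homogD_of_δ_eq (by decide))

theorem map_xw_zero_one_two {R : Type*} [Ring R] [Algebra ℂ R] (φ : TV 3 →ₐ[ℂ] R) :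
    φ (xw q [0, 1, 2]) = bracket123 (fun i j => (q i j : ℂ)) fun i => φ (gen 3 i) := by
  have hqf : qf q (δ 3 0) (degW 3 [1, 2]) = (q 0 1 : ℂ) * q 0 2 := by
    rw [show degW 3 [1, 2] = ![0, 1, 1] by decide]
    simp [qf, Fin.prod_univ_three, δ]
  rw [bracket123, bracket23, ← map_xw_pair, ← hqf, ← map_brk]
  rfl

namespace IsTypeG23

theorem map_xu231 (h : IsTypeG23 ξ fun i j => (q i j : ℂ)) {R : Type*} [Ring R] [Algebra ℂ R]
    (φ : TV 3 →ₐ[ℂ] R) :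
    φ (xu231 q) = bracketU (fun i j => (q i j : ℂ)) fun i => φ (gen 3 i) := by
  have hinner : qf q ![1, 1, 0] ![1, 1, 1] = (q 1 0 : ℂ) * q 0 1 * q 0 2 * q 1 2 := by
    simp [qf, Fin.prod_univ_three, h.diag]
    ring
  have houter : qf q ![2, 2, 1] ![0, 1, 0] = (q 0 1 : ℂ) ^ 2 * q 2 1 := by
    simp [qf, Fin.prod_univ_three, h.diag]
  rw [xu231, map_brk, map_brk, map_xw_pair, map_xw_zero_one_two, hinner, houter]
  rfl

theorem map_xv132 (h : IsTypeG23 ξ fun i j => (q i j : ℂ)) {R : Type*} [Ring R] [Algebra ℂ R]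
    (φ : TV 3 →ₐ[ℂ] R) :
    φ (xv132 q) = bracketV (fun i j => (q i j : ℂ)) fun i => φ (gen 3 i) := by
  have hinner : qf q ![1, 1, 1] ![0, 1, 1] = (q 0 1 : ℂ) * q 0 2 * q 1 2 * q 2 1 := by
    simp [qf, Fin.prod_univ_three, h.diag]
  have houter : qf q ![1, 2, 2] ![0, 1, 0] = (q 0 1 : ℂ) * q 2 1 ^ 2 := by
    simp [qf, Fin.prod_univ_three, h.diag]
  rw [xv132, map_brk, map_brk, map_xw_pair, map_xw_zero_one_two, hinner, houter]
  rfl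

theorem map_xu231_eq_add (h : IsTypeG23 ξ fun i j => (q i j : ℂ)) {R : Type*} [Ring R]
    [Algebra ℂ R] {φ ψ χ : TV 3 →ₐ[ℂ] R} (hφ : ∀ i, φ (gen 3 i) = ψ (gen 3 i) + χ (gen 3 i))
    (hψχ : BraidedTriples (fun i j => (q i j : ℂ)) (fun i => ψ (gen 3 i)) fun i => χ (gen 3 i)) :
    φ (xu231 q) = ψ (xu231 q) + χ (xu231 q) := by
  rw [h.map_xu231, h.map_xu231, h.map_xu231, ← hψχ.bracketU_add h, funext hφ]
  rfl

theorem map_xv132_eq_add (h : IsTypeG23 ξ fun i j => (q i j : ℂ)) {R : Type*} [Ring R]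
    [Algebra ℂ R] {φ ψ χ : TV 3 →ₐ[ℂ] R} (hφ : ∀ i, φ (gen 3 i) = ψ (gen 3 i) + χ (gen 3 i))
    (hψχ : BraidedTriples (fun i j => (q i j : ℂ)) (fun i => ψ (gen 3 i)) fun i => χ (gen 3 i)) :
    φ (xv132 q) = ψ (xv132 q) + χ (xv132 q) := by
  rw [h.map_xv132, h.map_xv132, h.map_xv132, ← hψχ.bracketV_add h, funext hφ]
  rfl

theorem isPrimitiveMod_xu231 (h : IsTypeG23 ξ fun i j => (q i j : ℂ))
    (hI : IsPreNicholsIdeal S I) (hGK : FinGK I) (hAAH : AAH) : hI.IsPrimitiveMod (xu231 q) :=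
  h.map_xu231_eq_add hI.quotCoprod_gen (h.braidedTriples hI hGK hAAH)

theorem isPrimitiveMod_xv132 (h : IsTypeG23 ξ fun i j => (q i j : ℂ))
    (hI : IsPreNicholsIdeal S I) (hGK : FinGK I) (hAAH : AAH) : hI.IsPrimitiveMod (xv132 q) :=
  h.map_xv132_eq_add hI.quotCoprod_gen (h.braidedTriples hI hGK hAAH)

theorem brk_mem (h : IsTypeG23 ξ fun i j => (q i j : ℂ)) (hI : IsPreNicholsIdeal S I)
    (hGK : FinGK I) (hAAH : AAH) {a b : Fin 3 → ℕ} {u v : TV 3} (hu : u ∈ homogD 3 a)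
    (hv : v ∈ homogD 3 b) (pu : hI.IsPrimitiveMod u) (pv : hI.IsPrimitiveMod v)
    (hab : a 1 * (b 0 + b 2) + b 1 * (a 0 + a 2) = 3) (h1 : a 1 + b 1 = 3)
    (h02 : a 0 + b 0 + (a 2 + b 2) = 4) : brk q a b u v ∈ I := by
  refine h.mem_of_isPrimitiveMod hI hGK hAAH (brk_mem_homogD q hu hv) ?_ h1 h02
  refine hI.isPrimitiveMod_brk hu hv pu pv ?_
  rw [h.qf_mul_swap, hab, h.isPrimitiveRoot.pow_eq_one]

end IsTypeG23

end RootVectors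

/-- Lemma 4.1: for `q` of type `g(2,3)` with Dynkin diagram
`(-1) —ξ— (-1) —ξ— (-1)`, `ξ ∈ G₃'`, the relations
`[x_1,x_u]_c = [x_v,x_3]_c = [x_u,x_3]_c = [x_1,x_v]_c = 0` hold in every
pre-Nichols algebra of `q` with finite GKdim. -/
theorem statement_17 (q : Fin 3 → Fin 3 → ℂˣ) (S : BraidedStr 3 q) (ξ : ℂ)
    (hξ : IsPrimitiveRoot ξ 3)
    (h11 : (q 0 0 : ℂ) = -1) (h22 : (q 1 1 : ℂ) = -1) (h33 : (q 2 2 : ℂ) = -1)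
    (h12 : qtil q 0 1 = ξ) (h23 : qtil q 1 2 = ξ) (h13 : qtil q 0 2 = 1)
    (hAAH : AAH)
    (I : Submodule ℂ (TV 3)) (hI : IsPreNicholsIdeal S I) (hGK : FinGK I) :
    brk q ![1, 0, 0] ![2, 3, 1] (gen 3 0) (xu231 q) ∈ I ∧
    brk q ![1, 3, 2] ![0, 0, 1] (xv132 q) (gen 3 2) ∈ I ∧
    brk q ![2, 3, 1] ![0, 0, 1] (xu231 q) (gen 3 2) ∈ I ∧
    brk q ![1, 0, 0] ![1, 3, 2] (gen 3 0) (xv132 q) ∈ I := by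
  have h : IsTypeG23 ξ fun i j => (q i j : ℂ) :=
    ⟨hξ, fun i => by fin_cases i <;> assumption, h12, h23, h13⟩
  have du := xu231_mem_homogD q
  have dv := xv132_mem_homogD q
  have pu := h.isPrimitiveMod_xu231 hI hGK hAAH
  have pv := h.isPrimitiveMod_xv132 hI hGK hAAH
  have d0 : gen 3 0 ∈ homogD 3 ![1, 0, 0] := gen_mem_homogD_of_δ_eq (by decide)
  have d2 : gen 3 2 ∈ homogD 3 ![0, 0, 1] := gen_mem_homogD_of_δ_eq (by decide)
  have p0 := hI.isPrimitiveMod_gen 0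
  have p2 := hI.isPrimitiveMod_gen 2
  exact ⟨h.brk_mem hI hGK hAAH d0 du p0 pu rfl rfl rfl,
    h.brk_mem hI hGK hAAH dv d2 pv p2 rfl rfl rfl,
    h.brk_mem hI hGK hAAH du d2 pu p2 rfl rfl rfl,
    h.brk_mem hI hGK hAAH d0 dv p0 pv rfl rfl rfl⟩

end PreNicholsPaper
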